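/- arXiv:2408.02459 — 2 statements merged into one kernel-verified Lean document; each statement's English description precedes it below -/
import Mathlib

section
/- Let Z be a standard Borel space with a Markov transition kernel P and a P-stationary probability measure μ (i.e. ∫ P(z,·) μ(dz) = μ). Let d ≥ 1 and let A : Z → SL(d,ℝ) be measurable; for M ∈ SL(d,ℝ) let M act on the unit sphere S^{d−1} ⊆ ℝ^d by v ↦ Mv/|Mv|, and let M_*σ denote the pushforward of a measure σ on S^{d−1} under this map. Suppose ν : Z → 𝒫(S^{d−1}) is a measurable family of probability measures on S^{d−1} satisfying the twisted pullback condition ν_z = (A(z)^{−1})_* ( ∫ ν_y P(z, dy) ) for every z ∈ Z. Define λ⁺ := lim_{n→∞} (1/n) ∫ ⋯ ∫ log‖A(z_{n−1}) ⋯ A(z₁) A(z₀)‖ P(z_{n−2}, dz_{n−1}) ⋯ P(z₀, dz₁) μ(dz₀), where ‖·‖ is the operator norm (note log‖·‖ ≥ 0 on SL(d,ℝ), so these integrals are well defined in [0,∞]). If this limit exists and equals 0, then the family is almost surely invariant: A(z₀)_* ν_{z₀} = ν_{z₁} for P(z₀, dz₁) μ(dz₀)-almost every pair (z₀, z₁)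 ∈ Z × Z. -/
open MeasureTheory ProbabilityTheory Filter
open scoped ENNReal

/-- The projective action of a `d × d` real matrix on the unit sphere of `ℝ^d`:
`v ↦ Mv/|Mv|` (extended arbitrarily where `Mv = 0`; for invertible `M` this never occurs). -/
noncomputable def projAct {d : ℕ} (M : Matrix (Fin d) (Fin d) ℝ)
    (v : Metric.sphere (0 : EuclideanSpace ℝ (Fin d)) 1) :
    Metric.sphere (0 : EuclideanSpace ℝ (Fin d)) 1 := by
  haveI := Classical.propDecidable
  exact if h : Matrix.toEuclideanLin M (v : EuclideanSpace ℝ (Fin d)) = 0 then v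
  else
    ⟨‖Matrix.toEuclideanLin M (v : EuclideanSpace ℝ (Fin d))‖⁻¹ •
        Matrix.toEuclideanLin M (v : EuclideanSpace ℝ (Fin d)),
      by rw [mem_sphere_zero_iff_norm]; exact norm_smul_inv_norm h⟩

/-- The operator norm of a `d × d` real matrix acting on Euclidean space. -/
noncomputable def matOpNorm {d : ℕ} (M : Matrix (Fin d) (Fin d) ℝ) : ℝ :=
  ‖LinearMap.toContinuousLinearMap (Matrix.toEuclideanLin M)‖

/-!
Write `z₀, z₁, …` for the chain and `gₙ = A(z_{n-1}) ⋯ A(z₀)`. The twisted pullback condition says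
exactly that the random measures `Wₙ = (gₙ⁻¹)_* ν_{zₙ}` form a martingale. Split the sphere into
`exp(O(s))` cells of diameter `exp(-s)`. The vector of cell masses of `Wₙ` is a martingale in a
simplex, so each step lowers its expected entropy by an amount that controls the `ℓ¹` size of the
step; as the total entropy drop is `O(s)`, taking `s = 2δn` makes the first `n` steps small on
average once `δ` is small. When the Lyapunov exponent vanishes, `gₙ` is `exp(δn)`-Lipschitz on the
sphere with probability close to one, so the steps remain small after `Wₙ` and `W_{n+1}` are pushed
forward by `g_{n+1}`, which turns them into `A(zₙ)_* ν_{zₙ}` and `ν_{z_{n+1}}`. By stationarity the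
expected discrepancy of this pair does not depend on `n`, and hence it is zero.
-/

open scoped NNReal

section Entropy

lemma sq_sqrt_sub_sqrt_le_mul_log_bregman {p q : ℝ} (hp : 0 < p) (hq : 0 < q) :
    (√p - √q) ^ 2 ≤ p * Real.log p - q * Real.log q - (1 + Real.log q) * (p - q) := by
  have hlog : Real.log (√q / √p) ≤ √q / √p - 1 :=
    Real.log_le_sub_one_of_pos (div_pos (Real.sqrt_pos.2 hq) (Real.sqrt_pos.2 hp))
  rw [Real.log_div (Real.sqrt_ne_zero'.2 hq) (Real.sqrt_ne_zero'.2 hp), Real.log_sqrt hq.le,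
    Real.log_sqrt hp.le] at hlog
  have hscaled : p * (√q / √p - 1) = √p * √q - p := by
    rw [mul_sub, mul_div_left_comm, Real.div_sqrt, mul_one, mul_comm]
  have hmul := mul_le_mul_of_nonneg_left hlog hp.le
  nlinarith [Real.sq_sqrt hp.le, Real.sq_sqrt hq.le]

lemma two_mul_abs_sub_le_sq_sqrt_sub_sqrt {p q : ℝ} (hp : 0 ≤ p) (hq : 0 ≤ q) (t : ℝ) :
    2 * t * |p - q| ≤ (√p - √q) ^ 2 + 2 * t ^ 2 * (p + q) := by
  have hfactor : |p - q| = |√p - √q| * (√p + √q) := by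
    rw [← abs_of_nonneg (add_nonneg (Real.sqrt_nonneg p) (Real.sqrt_nonneg q)), ← abs_mul,
      mul_comm, ← sq_sub_sq, Real.sq_sqrt hp, Real.sq_sqrt hq]
  calc 2 * t * |p - q| = 2 * |√p - √q| * (t * (√p + √q)) := by rw [hfactor]; ring
    _ ≤ |√p - √q| ^ 2 + (t * (√p + √q)) ^ 2 := two_mul_le_add_sq _ _
    _ = (√p - √q) ^ 2 + t ^ 2 * (√p + √q) ^ 2 := by rw [sq_abs, mul_pow]
    _ ≤ (√p - √q) ^ 2 + t ^ 2 * (2 * (√p ^ 2 + √q ^ 2)) := by gcongr; exact add_sq_le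
    _ = (√p - √q) ^ 2 + 2 * t ^ 2 * (p + q) := by
      rw [Real.sq_sqrt hp, Real.sq_sqrt hq]; ring

variable {ι : Type*} [Fintype ι]

/-- The Shannon entropy of a finite weight vector after adding the uniform weight `1 / card ι` to
every entry. The shift keeps the logarithms finite, so that the entropy is differentiable on the
whole standard simplex. -/
noncomputable def smoothedEntropy (w : ι → ℝ) : ℝ :=
  ∑ i, Real.negMulLog (w i + (Fintype.card ι : ℝ)⁻¹)

lemma measurable_smoothedEntropy : Measurable (smoothedEntropy : (ι → ℝ) → ℝ) :=
  Finset.measurable_sum _ fun i _ =>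
    Real.continuous_negMulLog.measurable.comp ((measurable_pi_apply i).add_const _)

variable {w w' : ι → ℝ}

lemma one_le_card_of_mem_stdSimplex (hw : w ∈ stdSimplex ℝ ι) : (1 : ℝ) ≤ Fintype.card ι := by
  have : Nonempty ι := by
    by_contra hempty
    rw [not_nonempty_iff] at hempty
    simp [stdSimplex_of_isEmpty_index] at hw
  exact_mod_cast Fintype.card_pos (α := ι)

lemma sum_add_inv_card_of_mem_stdSimplex (hw : w ∈ stdSimplex ℝ ι) :
    ∑ i, (w i + (Fintype.card ι : ℝ)⁻¹) = 2 := by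
  have hcard := one_le_card_of_mem_stdSimplex hw
  rw [Finset.sum_add_distrib, hw.2, Finset.sum_const, Finset.card_univ, nsmul_eq_mul,
    mul_inv_cancel₀ (by positivity)]
  norm_num

lemma add_inv_card_pos_of_mem_stdSimplex (hw : w ∈ stdSimplex ℝ ι) (i : ι) :
    0 < w i + (Fintype.card ι : ℝ)⁻¹ := by
  have hcard := one_le_card_of_mem_stdSimplex hw
  exact add_pos_of_nonneg_of_pos (hw.1 i) (by positivity)

lemma smoothedEntropy_le (hw : w ∈ stdSimplex ℝ ι) :
    smoothedEntropy w ≤ 2 * Real.log (Fintype.card ι) := by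
  have hcard := one_le_card_of_mem_stdSimplex hw
  rw [← sum_add_inv_card_of_mem_stdSimplex hw, Finset.sum_mul]
  refine Finset.sum_le_sum fun i _ => ?_
  have hlog : -Real.log (Fintype.card ι) ≤ Real.log (w i + (Fintype.card ι : ℝ)⁻¹) := by
    rw [← Real.log_inv]
    exact Real.log_le_log (by positivity) (le_add_of_nonneg_left (hw.1 i))
  rw [Real.negMulLog, neg_mul, ← mul_neg]
  exact mul_le_mul_of_nonneg_left (neg_le.1 hlog) (add_inv_card_pos_of_mem_stdSimplex hw i).le

lemma neg_two_mul_log_two_le_smoothedEntropy (hw : w ∈ stdSimplex ℝ ι) :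
    -(2 * Real.log 2) ≤ smoothedEntropy w := by
  have hcard := inv_le_one_of_one_le₀ (one_le_card_of_mem_stdSimplex hw)
  have htwo : 2 * Real.log 2 = ∑ i, (w i + (Fintype.card ι : ℝ)⁻¹) * Real.log 2 := by
    rw [← Finset.sum_mul, sum_add_inv_card_of_mem_stdSimplex hw]
  rw [htwo, ← Finset.sum_neg_distrib]
  refine Finset.sum_le_sum fun i _ => ?_
  have hpos := add_inv_card_pos_of_mem_stdSimplex hw i
  have hle_one : w i ≤ 1 := (mem_Icc_of_mem_stdSimplex hw i).2
  rw [Real.negMulLog, neg_mul, neg_le_neg_iff]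
  exact mul_le_mul_of_nonneg_left (Real.log_le_log hpos (by linarith)) hpos.le

lemma abs_smoothedEntropy_le (hw : w ∈ stdSimplex ℝ ι) :
    |smoothedEntropy w| ≤ 2 * Real.log (Fintype.card ι) + 2 * Real.log 2 := by
  have hcard := Real.log_nonneg (one_le_card_of_mem_stdSimplex hw)
  have htwo := Real.log_nonneg one_le_two
  exact abs_le.2 ⟨by linarith [neg_two_mul_log_two_le_smoothedEntropy hw],
    by linarith [smoothedEntropy_le hw]⟩

lemma two_mul_sum_abs_sub_le_smoothedEntropy_sub (hw : w ∈ stdSimplex ℝ ι)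
    (hw' : w' ∈ stdSimplex ℝ ι) (t : ℝ) :
    2 * t * ∑ i, |w' i - w i| ≤ smoothedEntropy w - smoothedEntropy w' + 8 * t ^ 2
      - ∑ i, (1 + Real.log (w i + (Fintype.card ι : ℝ)⁻¹)) * (w' i - w i) := by
  have hmass : 8 * t ^ 2 = ∑ i, 2 * t ^ 2 *
      ((w' i + (Fintype.card ι : ℝ)⁻¹) + (w i + (Fintype.card ι : ℝ)⁻¹)) := by
    rw [← Finset.mul_sum, Finset.sum_add_distrib, sum_add_inv_card_of_mem_stdSimplex hw,
      sum_add_inv_card_of_mem_stdSimplex hw']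
    ring
  rw [hmass, smoothedEntropy, smoothedEntropy, Finset.mul_sum, ← Finset.sum_sub_distrib,
    ← Finset.sum_add_distrib, ← Finset.sum_sub_distrib]
  refine Finset.sum_le_sum fun i _ => ?_
  have hpos := add_inv_card_pos_of_mem_stdSimplex hw i
  have hpos' := add_inv_card_pos_of_mem_stdSimplex hw' i
  have habs := two_mul_abs_sub_le_sq_sqrt_sub_sqrt hpos'.le hpos.le t
  have hbregman := sq_sqrt_sub_sqrt_le_mul_log_bregman hpos' hpos
  rw [add_sub_add_right_eq_sub] at habs hbregman
  simp only [Real.negMulLog]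
  linarith

end Entropy

section SimplexMartingale

variable {ι : Type*} [Fintype ι]

section Mean

variable {Ω : Type*} [MeasurableSpace Ω] (π : Measure Ω) {w : Ω → ι → ℝ}

lemma integrable_of_mem_stdSimplex [IsFiniteMeasure π] (hw : Measurable w)
    (hmem : ∀ ω, w ω ∈ stdSimplex ℝ ι) (i : ι) : Integrable (fun ω => w ω i) π :=
  .of_bound (hw.eval (a := i)).aestronglyMeasurable 1 (.of_forall fun ω => by
    obtain ⟨h0, h1⟩ := mem_Icc_of_mem_stdSimplex (hmem ω) i
    rwa [Real.norm_of_nonneg h0])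

lemma integrable_smoothedEntropy [IsFiniteMeasure π] (hw : Measurable w)
    (hmem : ∀ ω, w ω ∈ stdSimplex ℝ ι) : Integrable (fun ω => smoothedEntropy (w ω)) π :=
  .of_bound (measurable_smoothedEntropy.comp hw).aestronglyMeasurable _
    (.of_forall fun ω => abs_smoothedEntropy_le (hmem ω))

lemma integral_mem_stdSimplex [IsProbabilityMeasure π] (hw : Measurable w)
    (hmem : ∀ ω, w ω ∈ stdSimplex ℝ ι) : (fun i => ∫ ω, w ω i ∂π) ∈ stdSimplex ℝ ι := by
  refine ⟨fun i => integral_nonneg fun ω => (hmem ω).1 i, ?_⟩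
  rw [← integral_finsetSum _ fun i _ => integrable_of_mem_stdSimplex π hw hmem i]
  simp [(hmem _).2]

-- The linear term of the Bregman inequality at the barycentre integrates to zero.
lemma two_mul_integral_sum_abs_sub_mean_le [IsProbabilityMeasure π] (hw : Measurable w)
    (hmem : ∀ ω, w ω ∈ stdSimplex ℝ ι) (t : ℝ) :
    2 * t * ∫ ω, ∑ i, |w ω i - ∫ ω', w ω' i ∂π| ∂π ≤
      smoothedEntropy (fun i => ∫ ω, w ω i ∂π) - ∫ ω, smoothedEntropy (w ω) ∂π + 8 * t ^ 2 := by
  set m : ι → ℝ := fun i => ∫ ω, w ω i ∂π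
  set slope : ι → ℝ := fun i => 1 + Real.log (m i + (Fintype.card ι : ℝ)⁻¹)
  have hint := integrable_of_mem_stdSimplex π hw hmem
  have hdiff (i : ι) : Integrable (fun ω => w ω i - m i) π := (hint i).sub (integrable_const _)
  have hdrop : Integrable (fun ω => smoothedEntropy m - smoothedEntropy (w ω)) π :=
    (integrable_const _).sub (integrable_smoothedEntropy π hw hmem)
  have hdrop_add : Integrable
      (fun ω => smoothedEntropy m - smoothedEntropy (w ω) + 8 * t ^ 2) π :=
    hdrop.add (integrable_const _)
  have hlinear : Integrable (fun ω => ∑ i, slope i * (w ω i - m i)) π :=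
    integrable_finsetSum _ fun i _ => (hdiff i).const_mul _
  have hlinear_zero : ∫ ω, ∑ i, slope i * (w ω i - m i) ∂π = 0 := by
    rw [integral_finsetSum _ fun i _ => (hdiff i).const_mul _]
    refine Finset.sum_eq_zero fun i _ => ?_
    rw [integral_const_mul, integral_sub (hint i) (integrable_const _), integral_const,
      probReal_univ, one_smul, sub_self, mul_zero]
  calc 2 * t * ∫ ω, ∑ i, |w ω i - m i| ∂π
      = ∫ ω, 2 * t * ∑ i, |w ω i - m i| ∂π := (integral_const_mul _ _).symm
    _ ≤ ∫ ω, (smoothedEntropy m - smoothedEntropy (w ω) + 8 * t ^ 2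
          - ∑ i, slope i * (w ω i - m i)) ∂π :=
      integral_mono ((integrable_finsetSum _ fun i _ => (hdiff i).abs).const_mul _)
        (hdrop_add.sub hlinear) fun ω => two_mul_sum_abs_sub_le_smoothedEntropy_sub
          (integral_mem_stdSimplex π hw hmem) (hmem ω) t
    _ = smoothedEntropy m - ∫ ω, smoothedEntropy (w ω) ∂π + 8 * t ^ 2 := by
      rw [integral_sub hdrop_add hlinear, hlinear_zero, integral_add hdrop (integrable_const _),
        integral_sub (integrable_const _) (integrable_smoothedEntropy π hw hmem)]
      simp

end Mean

variable {X : Type*} [MeasurableSpace X] (Q : Kernel X X) (ρ : Measure X)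

/-- The law at time `n` of the Markov chain with transition kernel `Q` and initial law `ρ`. -/
noncomputable def chainLaw : ℕ → Measure X
  | 0 => ρ
  | n + 1 => Q ∘ₘ chainLaw n

instance isProbabilityMeasure_chainLaw [IsMarkovKernel Q] [IsProbabilityMeasure ρ] (n : ℕ) :
    IsProbabilityMeasure (chainLaw Q ρ n) := by
  induction n with
  | zero => exact ‹IsProbabilityMeasure ρ›
  | succ n _ => exact inferInstanceAs (IsProbabilityMeasure (Q ∘ₘ chainLaw Q ρ n))

variable [IsMarkovKernel Q] [IsProbabilityMeasure ρ] {F : X → ι → ℝ}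

lemma integrable_sum_abs_sub_of_mem_stdSimplex (hF : Measurable F)
    (hmem : ∀ x, F x ∈ stdSimplex ℝ ι) (π : Measure (X × X)) [IsFiniteMeasure π] :
    Integrable (fun p : X × X => ∑ i, |F p.2 i - F p.1 i|) π :=
  integrable_finsetSum _ fun i _ =>
    ((integrable_of_mem_stdSimplex π (hF.comp measurable_snd) (fun p => hmem p.2) i).sub
      (integrable_of_mem_stdSimplex π (hF.comp measurable_fst) (fun p => hmem p.1) i)).abs

lemma integrable_integral_of_compProd {Y : Type*} [MeasurableSpace Y] {κ : Kernel X Y}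
    [IsSFiniteKernel κ] {π : Measure X} [SFinite π] {f : X × Y → ℝ}
    (hf : Integrable f (π ⊗ₘ κ)) : Integrable (fun x => ∫ y, f (x, y) ∂κ x) π := by
  simpa using Integrable.integral_compProd (κ := Kernel.const Unit π) (a := ()) hf

lemma two_mul_integral_sum_abs_sub_le_of_harmonic (hF : Measurable F)
    (hmem : ∀ x, F x ∈ stdSimplex ℝ ι) (hharm : ∀ x i, ∫ y, F y i ∂Q x = F x i) (t : ℝ) :
    2 * t * ∫ p, ∑ i, |F p.2 i - F p.1 i| ∂(ρ ⊗ₘ Q) ≤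
      ∫ x, smoothedEntropy (F x) ∂ρ - ∫ x, smoothedEntropy (F x) ∂(Q ∘ₘ ρ) + 8 * t ^ 2 := by
  have hvar := integrable_sum_abs_sub_of_mem_stdSimplex hF hmem (ρ ⊗ₘ Q)
  have hstart := integrable_smoothedEntropy ρ hF hmem
  have hend : Integrable (fun p : X × X => smoothedEntropy (F p.2)) (ρ ⊗ₘ Q) :=
    integrable_smoothedEntropy _ (hF.comp measurable_snd) fun p => hmem p.2
  have hend_eq : ∫ x, smoothedEntropy (F x) ∂(Q ∘ₘ ρ) =
      ∫ x, ∫ y, smoothedEntropy (F y) ∂Q x ∂ρ := by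
    rw [← Measure.integral_compProd hend, ← Measure.snd_compProd, Measure.snd]
    exact integral_map measurable_snd.aemeasurable
      (measurable_smoothedEntropy.comp hF).aestronglyMeasurable
  have hstep (x : X) : 2 * t * ∫ y, ∑ i, |F y i - F x i| ∂Q x ≤
      smoothedEntropy (F x) - ∫ y, smoothedEntropy (F y) ∂Q x + 8 * t ^ 2 := by
    simpa only [hharm] using two_mul_integral_sum_abs_sub_mean_le (Q x) hF hmem t
  have hdrop : Integrable (fun x => smoothedEntropy (F x) - ∫ y, smoothedEntropy (F y) ∂Q x) ρ :=
    hstart.sub (integrable_integral_of_compProd hend)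
  calc 2 * t * ∫ p, ∑ i, |F p.2 i - F p.1 i| ∂(ρ ⊗ₘ Q)
      = ∫ x, 2 * t * ∫ y, ∑ i, |F y i - F x i| ∂Q x ∂ρ := by
        rw [Measure.integral_compProd hvar, integral_const_mul]
    _ ≤ ∫ x, (smoothedEntropy (F x) - ∫ y, smoothedEntropy (F y) ∂Q x + 8 * t ^ 2) ∂ρ :=
        integral_mono ((integrable_integral_of_compProd hvar).const_mul _)
          (hdrop.add (integrable_const _)) hstep
    _ = ∫ x, smoothedEntropy (F x) ∂ρ - ∫ x, smoothedEntropy (F x) ∂(Q ∘ₘ ρ) + 8 * t ^ 2 := by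
        rw [integral_add hdrop (integrable_const _),
          integral_sub hstart (integrable_integral_of_compProd hend),
          hend_eq]
        simp

lemma two_mul_sum_integral_sum_abs_sub_le_of_harmonic (hF : Measurable F)
    (hmem : ∀ x, F x ∈ stdSimplex ℝ ι) (hharm : ∀ x i, ∫ y, F y i ∂Q x = F x i) (t : ℝ) (n : ℕ) :
    2 * t * ∑ k ∈ Finset.range n, ∫ p, ∑ i, |F p.2 i - F p.1 i| ∂(chainLaw Q ρ k ⊗ₘ Q) ≤
      2 * Real.log (Fintype.card ι) + 2 * Real.log 2 + 8 * t ^ 2 * n := by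
  set entropy : ℕ → ℝ := fun k => ∫ x, smoothedEntropy (F x) ∂(chainLaw Q ρ k)
  have hint (k : ℕ) := integrable_smoothedEntropy (chainLaw Q ρ k) hF hmem
  have hstart : entropy 0 ≤ 2 * Real.log (Fintype.card ι) := by
    simpa using integral_mono (hint 0) (integrable_const _) fun x => smoothedEntropy_le (hmem x)
  have hend : -(2 * Real.log 2) ≤ entropy n := by
    simpa using integral_mono (integrable_const _) (hint n)
      fun x => neg_two_mul_log_two_le_smoothedEntropy (hmem x)
  calc 2 * t * ∑ k ∈ Finset.range n, ∫ p, ∑ i, |F p.2 i - F p.1 i| ∂(chainLaw Q ρ k ⊗ₘ Q)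
      ≤ ∑ k ∈ Finset.range n, (entropy k - entropy (k + 1) + 8 * t ^ 2) := by
        rw [Finset.mul_sum]
        exact Finset.sum_le_sum fun k _ =>
          two_mul_integral_sum_abs_sub_le_of_harmonic Q (chainLaw Q ρ k) hF hmem hharm t
    _ = entropy 0 - entropy n + 8 * t ^ 2 * n := by
        rw [Finset.sum_add_distrib, Finset.sum_range_sub']
        simp [mul_comm]
    _ ≤ 2 * Real.log (Fintype.card ι) + 2 * Real.log 2 + 8 * t ^ 2 * n := by linarith

end SimplexMartingale

section Discretisation

variable {S ι : Type*} [MeasurableSpace S] [Fintype ι] [MeasurableSpace ι]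
  [MeasurableSingletonClass ι] {c : S → ι}

lemma measureReal_fiber_mem_stdSimplex (W : Measure S) [IsProbabilityMeasure W]
    (hc : Measurable c) : (fun i => W.real (c ⁻¹' {i})) ∈ stdSimplex ℝ ι := by
  refine ⟨fun i => measureReal_nonneg, ?_⟩
  rw [sum_measureReal_preimage_singleton _ fun i _ => hc (measurableSet_singleton i)]
  simp

lemma integral_comp_eq_sum_fiber (W : Measure S) [IsFiniteMeasure W] (hc : Measurable c)
    (h : ι → ℝ) : ∫ x, h (c x) ∂W = ∑ i, W.real (c ⁻¹' {i}) * h i := by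
  rw [← integral_map hc.aemeasurable (measurable_of_finite h).aestronglyMeasurable,
    integral_fintype .of_finite]
  simp_rw [smul_eq_mul, map_measureReal_apply hc (measurableSet_singleton _)]

variable {ψ : S → ℝ} {r : ℝ} (W W' : Measure S) [IsProbabilityMeasure W] [IsProbabilityMeasure W']

lemma abs_integral_sub_integral_le_two (hψ_le : ∀ x, |ψ x| ≤ 1) :
    |∫ x, ψ x ∂W' - ∫ x, ψ x ∂W| ≤ 2 := by
  have hle (V : Measure S) [IsProbabilityMeasure V] : |∫ x, ψ x ∂V| ≤ 1 := by
    simpa using norm_integral_le_of_norm_le_const (μ := V) (f := ψ) (.of_forall hψ_le)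
  exact (abs_sub _ _).trans (by linarith [hle W, hle W'])

lemma abs_integral_sub_integral_le_sum_fiber (hc : Measurable c) (hψ : Measurable ψ)
    (hψ_le : ∀ x, |ψ x| ≤ 1) (hosc : ∀ x y, c x = c y → |ψ x - ψ y| ≤ r) :
    |∫ x, ψ x ∂W' - ∫ x, ψ x ∂W| ≤ ∑ i, |W'.real (c ⁻¹' {i}) - W.real (c ⁻¹' {i})| + 2 * r := by
  have : Nonempty S := W.nonempty_of_neZero
  set h : ι → ℝ := fun i => ψ (Function.invFun c i)
  have hstep (V : Measure S) [IsProbabilityMeasure V] : |∫ x, ψ x ∂V - ∫ x, h (c x) ∂V| ≤ r := by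
    have hh : Measurable (fun x => h (c x)) := (measurable_of_finite h).comp hc
    rw [← integral_sub (.of_bound hψ.aestronglyMeasurable 1 (.of_forall hψ_le))
      (.of_bound hh.aestronglyMeasurable 1 (.of_forall fun x => hψ_le _))]
    simpa using norm_integral_le_of_norm_le_const (μ := V) (f := fun x => ψ x - h (c x))
      (.of_forall fun x => hosc _ _ (Function.invFun_eq ⟨x, rfl⟩).symm)
  have hcells : |∫ x, h (c x) ∂W' - ∫ x, h (c x) ∂W| ≤
      ∑ i, |W'.real (c ⁻¹' {i}) - W.real (c ⁻¹' {i})| := by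
    rw [integral_comp_eq_sum_fiber W hc, integral_comp_eq_sum_fiber W' hc,
      ← Finset.sum_sub_distrib]
    refine (Finset.abs_sum_le_sum_abs _ _).trans (Finset.sum_le_sum fun i _ => ?_)
    rw [← sub_mul, abs_mul]
    exact mul_le_of_le_one_right (abs_nonneg _) (hψ_le _)
  calc |∫ x, ψ x ∂W' - ∫ x, ψ x ∂W|
      = |(∫ x, h (c x) ∂W' - ∫ x, h (c x) ∂W) + (∫ x, ψ x ∂W' - ∫ x, h (c x) ∂W')
          - (∫ x, ψ x ∂W - ∫ x, h (c x) ∂W)| := by ring_nf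
    _ ≤ |∫ x, h (c x) ∂W' - ∫ x, h (c x) ∂W| + |∫ x, ψ x ∂W' - ∫ x, h (c x) ∂W'|
          + |∫ x, ψ x ∂W - ∫ x, h (c x) ∂W| :=
        (abs_sub _ _).trans (add_le_add_left (abs_add_le _ _) _)
    _ ≤ ∑ i, |W'.real (c ⁻¹' {i}) - W.real (c ⁻¹' {i})| + 2 * r := by
        linarith [hstep W, hstep W']

end Discretisation

section HarmonicKernel

variable {X S : Type*} [MeasurableSpace X] [MeasurableSpace S] {Q : Kernel X X} {W : Kernel X S}

lemma measurable_measureReal_fiber {ι : Type*} [MeasurableSpace ι] [MeasurableSingletonClass ι]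
    {c : S → ι} (hc : Measurable c) : Measurable fun x i => (W x).real (c ⁻¹' {i}) :=
  measurable_pi_lambda _ fun i =>
    (W.measurable_coe (hc (measurableSet_singleton i))).ennreal_toReal

variable [IsMarkovKernel W]

lemma integral_measureReal_of_comp_eq (hW : W ∘ₖ Q = W) {s : Set S}
    (hs : MeasurableSet s) (x : X) : ∫ y, (W y).real s ∂Q x = (W x).real s := by
  simp only [measureReal_def]
  rw [integral_toReal (W.measurable_coe hs).aemeasurable (.of_forall fun y => measure_lt_top _ _),
    ← Kernel.comp_apply' _ _ _ hs, hW]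

variable [PseudoMetricSpace S] [BorelSpace S] [IsMarkovKernel Q] {ι : Type*} [Fintype ι]
  [MeasurableSpace ι] [MeasurableSingletonClass ι] {c : S → ι} {r R : ℝ} {ψ : X → S → ℝ}
  {K : X → ℝ≥0}

lemma abs_integral_sub_integral_le_add_indicator (hc : Measurable c)
    (hdiam : ∀ s s', c s = c s' → dist s s' ≤ r) (hψ : ∀ x, LipschitzWith (K x) (ψ x))
    (hψ_le : ∀ x s, |ψ x s| ≤ 1) (hR : 0 ≤ R) (x y : X) :
    |∫ s, ψ y s ∂W y - ∫ s, ψ y s ∂W x| ≤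
      ∑ i, |(W y).real (c ⁻¹' {i}) - (W x).real (c ⁻¹' {i})| + 2 * (R * r)
        + {y | R < K y}.indicator (fun _ => 2) y := by
  have : Nonempty S := (W x).nonempty_of_neZero
  have hr : 0 ≤ r := by
    obtain ⟨s⟩ := this
    exact dist_nonneg.trans (hdiam s s rfl)
  by_cases hy : R < K y
  · rw [Set.indicator_of_mem (show y ∈ {y | R < K y} from hy)]
    exact (abs_integral_sub_integral_le_two _ _ (hψ_le y)).trans
      (le_add_of_nonneg_left (by positivity))
  · rw [Set.indicator_of_notMem (show y ∉ {y | R < K y} from hy), add_zero]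
    refine abs_integral_sub_integral_le_sum_fiber _ _ hc (hψ y).continuous.measurable (hψ_le y)
      fun s s' hs => ?_
    calc |ψ y s - ψ y s'| ≤ K y * dist s s' := (hψ y).dist_le_mul s s'
      _ ≤ R * r := mul_le_mul (not_lt.1 hy) (hdiam s s' hs) dist_nonneg hR

lemma integral_abs_integral_sub_integral_le (hc : Measurable c)
    (hdiam : ∀ s s', c s = c s' → dist s s' ≤ r) (hψ : ∀ x, LipschitzWith (K x) (ψ x))
    (hψ_le : ∀ x s, |ψ x s| ≤ 1) (hR : 0 ≤ R) (hK : Measurable K) (ρ : Measure X)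
    [IsProbabilityMeasure ρ] :
    ∫ p, |∫ s, ψ p.2 s ∂W p.2 - ∫ s, ψ p.2 s ∂W p.1| ∂(ρ ⊗ₘ Q) ≤
      ∫ p, ∑ i, |(W p.2).real (c ⁻¹' {i}) - (W p.1).real (c ⁻¹' {i})| ∂(ρ ⊗ₘ Q)
        + 2 * (R * r) + 2 * (Q ∘ₘ ρ).real {x | R < K x} := by
  have hset : MeasurableSet {x | R < K x} := measurableSet_lt measurable_const hK.coe_nnreal_real
  have htail : Integrable (fun p : X × X => {x | R < K x}.indicator (fun _ => (2 : ℝ)) p.2)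
      (ρ ⊗ₘ Q) := (integrable_const (2 : ℝ)).indicator (measurable_snd hset)
  have htail_eq : ∫ p, {x | R < K x}.indicator (fun _ => (2 : ℝ)) p.2 ∂(ρ ⊗ₘ Q) =
      2 * (Q ∘ₘ ρ).real {x | R < K x} := by
    rw [← Measure.snd_compProd, Measure.snd, ← integral_map measurable_snd.aemeasurable
      (measurable_const.indicator hset).aestronglyMeasurable, integral_indicator_const _ hset,
      smul_eq_mul, mul_comm]
  have hvar : Integrable (fun p : X × X =>
      ∑ i, |(W p.2).real (c ⁻¹' {i}) - (W p.1).real (c ⁻¹' {i})|) (ρ ⊗ₘ Q) :=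
    integrable_sum_abs_sub_of_mem_stdSimplex (measurable_measureReal_fiber hc)
      (fun x => measureReal_fiber_mem_stdSimplex (W x) hc) _
  refine (integral_mono_of_nonneg (.of_forall fun p => abs_nonneg _)
    ((hvar.add (integrable_const _)).add htail) (.of_forall fun p =>
      abs_integral_sub_integral_le_add_indicator hc hdiam hψ hψ_le hR p.1 p.2)).trans_eq ?_
  rw [integral_add' (hvar.add (integrable_const _)) htail, integral_add' hvar (integrable_const _),
    htail_eq, integral_const, probReal_univ, one_smul]

lemma sum_integral_abs_integral_sub_integral_le (hc : Measurable c)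
    (hdiam : ∀ s s', c s = c s' → dist s s' ≤ r) (hψ : ∀ x, LipschitzWith (K x) (ψ x))
    (hψ_le : ∀ x s, |ψ x s| ≤ 1) (hR : 0 ≤ R) (hW : W ∘ₖ Q = W) (hK : Measurable K)
    (ρ : Measure X) [IsProbabilityMeasure ρ] {t : ℝ} (ht : 0 < t) (n : ℕ) :
    ∑ k ∈ Finset.range n,
        ∫ p, |∫ s, ψ p.2 s ∂W p.2 - ∫ s, ψ p.2 s ∂W p.1| ∂(chainLaw Q ρ k ⊗ₘ Q) ≤
      (Real.log (Fintype.card ι) + Real.log 2) / t + 4 * t * n + 2 * (R * r) * n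
        + 2 * ∑ k ∈ Finset.range n, (chainLaw Q ρ (k + 1)).real {x | R < K x} := by
  set variation : ℕ → ℝ := fun k =>
    ∫ p, ∑ i, |(W p.2).real (c ⁻¹' {i}) - (W p.1).real (c ⁻¹' {i})| ∂(chainLaw Q ρ k ⊗ₘ Q)
  have hvariation : ∑ k ∈ Finset.range n, variation k ≤
      (Real.log (Fintype.card ι) + Real.log 2) / t + 4 * t * n := by
    have hmain := two_mul_sum_integral_sum_abs_sub_le_of_harmonic Q ρ
      (measurable_measureReal_fiber hc) (fun x => measureReal_fiber_mem_stdSimplex (W x) hc)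
      (fun x i => integral_measureReal_of_comp_eq hW (hc (measurableSet_singleton i)) x) t n
    rw [div_add' _ _ _ ht.ne', le_div_iff₀ ht]
    linarith
  calc ∑ k ∈ Finset.range n,
        ∫ p, |∫ s, ψ p.2 s ∂W p.2 - ∫ s, ψ p.2 s ∂W p.1| ∂(chainLaw Q ρ k ⊗ₘ Q)
      ≤ ∑ k ∈ Finset.range n, (variation k + 2 * (R * r)
          + 2 * (chainLaw Q ρ (k + 1)).real {x | R < K x}) :=
        Finset.sum_le_sum fun k _ =>
          integral_abs_integral_sub_integral_le hc hdiam hψ hψ_le hR hK (chainLaw Q ρ k)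
    _ = ∑ k ∈ Finset.range n, variation k + 2 * (R * r) * n
          + 2 * ∑ k ∈ Finset.range n, (chainLaw Q ρ (k + 1)).real {x | R < K x} := by
        rw [Finset.sum_add_distrib, Finset.sum_add_distrib, Finset.sum_const, Finset.card_range,
          nsmul_eq_mul, mul_comm (n : ℝ), Finset.mul_sum]
    _ ≤ _ := by gcongr

end HarmonicKernel

section BoxDimension

/-- The box-counting function of `S` grows at most at rate `D`: for every `s ≥ 0` the space splits
into at most `exp (a + D * s)` measurable pieces of diameter at most `exp (-s)`. The pieces are
encoded as the fibres of a measurable labelling `c`. -/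
def HasBoxCountLE (S : Type*) [PseudoMetricSpace S] [MeasurableSpace S] (a D : ℝ) : Prop :=
  ∀ s : ℝ, 0 ≤ s → ∃ (N : ℕ) (c : S → Fin N), Measurable c ∧
    Real.log N ≤ a + D * s ∧ ∀ x y, c x = c y → dist x y ≤ Real.exp (-s)

/-- The random variables `K` on the probability spaces `(X, ρ k)` grow subexponentially in
probability: for every rate `δ > 0`, the probability of `exp (δ * k) < K` tends to zero. The same
function `K` is used at all times, the time dependence being carried by the laws `ρ k`. -/
def SubexponentialInProbability {X : Type*} [MeasurableSpace X] (ρ : ℕ → Measure X)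
    (K : X → ℝ≥0) : Prop :=
  ∀ δ : ℝ, 0 < δ → Tendsto (fun k => (ρ k).real {x | Real.exp (δ * k) < K x}) atTop (nhds 0)

lemma SubexponentialInProbability.const_mul_pow {X : Type*} [MeasurableSpace X]
    {ρ : ℕ → Measure X} [∀ k, IsFiniteMeasure (ρ k)] {K : X → ℝ≥0}
    (hK : SubexponentialInProbability ρ K) (C : ℝ≥0) (D : ℕ) :
    SubexponentialInProbability ρ (fun x => C * K x ^ D) := by
  intro δ hδ
  have hconst : ∀ᶠ k : ℕ in atTop, (C : ℝ) ≤ Real.exp (δ / 2 * k) :=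
    (Real.tendsto_exp_atTop.comp (tendsto_natCast_atTop_atTop.const_mul_atTop
      (half_pos hδ))).eventually_ge_atTop _
  have hrate : D * (δ / (2 * (D + 1))) ≤ δ / 2 := by
    rw [← mul_div_assoc, div_le_div_iff₀ (by positivity) two_pos]
    nlinarith
  refine squeeze_zero' (.of_forall fun k => measureReal_nonneg) ?_
    (hK (δ / (2 * (D + 1))) (by positivity))
  filter_upwards [hconst] with k hk
  refine measureReal_mono (Set.ofPred_subset_ofPred.2 fun x => ?_)
  contrapose!
  intro hx
  calc ((C * K x ^ D : ℝ≥0) : ℝ) = C * (K x : ℝ) ^ D := by push_cast; rfl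
    _ ≤ Real.exp (δ / 2 * k) * Real.exp (δ / (2 * (D + 1)) * k) ^ D := by gcongr
    _ = Real.exp (δ / 2 * k + D * (δ / (2 * (D + 1))) * k) := by
        rw [← Real.exp_nat_mul, ← Real.exp_add]; ring_nf
    _ ≤ Real.exp (δ / 2 * k + δ / 2 * k) := by gcongr
    _ = Real.exp (δ * k) := by ring_nf

variable {X S : Type*} [MeasurableSpace X] [MeasurableSpace S] [PseudoMetricSpace S] [BorelSpace S]
  {Q : Kernel X X} [IsMarkovKernel Q] {W : Kernel X S} [IsMarkovKernel W] {ψ : X → S → ℝ}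
  {K : X → ℝ≥0} {a D : ℝ}

lemma average_integral_abs_integral_sub_integral_le (hS : HasBoxCountLE S a D)
    (hW : W ∘ₖ Q = W) (hψ : ∀ x, LipschitzWith (K x) (ψ x)) (hψ_le : ∀ x s, |ψ x s| ≤ 1)
    (hK : Measurable K) (ρ : Measure X) [IsProbabilityMeasure ρ] {t : ℝ} (ht : 0 < t) {n : ℕ}
    (hn : 0 < n) :
    (n : ℝ)⁻¹ * ∑ k ∈ Finset.range n,
        ∫ p, |∫ s, ψ p.2 s ∂W p.2 - ∫ s, ψ p.2 s ∂W p.1| ∂(chainLaw Q ρ k ⊗ₘ Q) ≤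
      (2 * D + 4) * t + ((a + Real.log 2) / t) * (n : ℝ)⁻¹ + 2 * Real.exp (-(t ^ 2 * n))
        + 2 * ((n : ℝ)⁻¹ * ∑ k ∈ Finset.range n,
          (chainLaw Q ρ (k + 1)).real {x | Real.exp (t ^ 2 * (k + 1 : ℕ)) < K x}) := by
  obtain ⟨N, c, hc, hN, hdiam⟩ := hS (2 * (t ^ 2 * n)) (by positivity)
  have hn' : (0 : ℝ) < n := Nat.cast_pos.2 hn
  have hsum := sum_integral_abs_integral_sub_integral_le hc hdiam hψ hψ_le
    (Real.exp_nonneg (t ^ 2 * n)) hW hK ρ ht n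
  have hscale : Real.exp (t ^ 2 * n) * Real.exp (-(2 * (t ^ 2 * n))) = Real.exp (-(t ^ 2 * n)) := by
    rw [← Real.exp_add]; ring_nf
  have htail : ∑ k ∈ Finset.range n, (chainLaw Q ρ (k + 1)).real {x | Real.exp (t ^ 2 * n) < K x} ≤
      ∑ k ∈ Finset.range n,
        (chainLaw Q ρ (k + 1)).real {x | Real.exp (t ^ 2 * (k + 1 : ℕ)) < K x} := by
    refine Finset.sum_le_sum fun k hk => measureReal_mono (Set.ofPred_subset_ofPred.2 fun x hx =>
      lt_of_le_of_lt ?_ hx)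
    have hkn : ((k + 1 : ℕ) : ℝ) ≤ n := Nat.cast_le.2 (Finset.mem_range.1 hk)
    gcongr
  rw [Fintype.card_fin, hscale] at hsum
  rw [inv_mul_le_iff₀ hn']
  calc _ ≤ _ := hsum
    _ ≤ (a + D * (2 * (t ^ 2 * n)) + Real.log 2) / t + 4 * t * n
          + 2 * Real.exp (-(t ^ 2 * n)) * n + 2 * ∑ k ∈ Finset.range n,
            (chainLaw Q ρ (k + 1)).real {x | Real.exp (t ^ 2 * (k + 1 : ℕ)) < K x} := by
        gcongr
    _ = _ := by field_simp; ring

theorem tendsto_average_integral_abs_integral_sub_integral (hS : HasBoxCountLE S a D)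
    (hW : W ∘ₖ Q = W) (hψ : ∀ x, LipschitzWith (K x) (ψ x)) (hψ_le : ∀ x s, |ψ x s| ≤ 1)
    (hK : Measurable K) (ρ : Measure X) [IsProbabilityMeasure ρ]
    (hsub : SubexponentialInProbability (chainLaw Q ρ) K) :
    Tendsto (fun n : ℕ => (n : ℝ)⁻¹ * ∑ k ∈ Finset.range n,
      ∫ p, |∫ s, ψ p.2 s ∂W p.2 - ∫ s, ψ p.2 s ∂W p.1| ∂(chainLaw Q ρ k ⊗ₘ Q)) atTop (nhds 0) := by
  refine tendsto_order.2 ⟨fun b hb => .of_forall fun n => hb.trans_le ?_, fun ε hε => ?_⟩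
  · exact mul_nonneg (by positivity) (Finset.sum_nonneg fun k _ => integral_nonneg fun p =>
      abs_nonneg _)
  obtain ⟨t, ht, htε⟩ : ∃ t : ℝ, 0 < t ∧ (2 * D + 4) * t < ε := by
    have hlim : Tendsto (fun t : ℝ => (2 * D + 4) * t) (nhdsWithin 0 (Set.Ioi 0)) (nhds 0) :=
      ((continuous_const_mul _).tendsto' 0 0 (mul_zero _)).mono_left nhdsWithin_le_nhds
    exact ((eventually_mem_nhdsWithin).and (hlim.eventually_lt_const hε)).exists
  have hexp : Tendsto (fun n : ℕ => Real.exp (-(t ^ 2 * n))) atTop (nhds 0) :=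
    Real.tendsto_exp_neg_atTop_nhds_zero.comp
      (tendsto_natCast_atTop_atTop.const_mul_atTop (by positivity))
  have htail := ((tendsto_add_atTop_iff_nat 1).2 (hsub (t ^ 2) (by positivity))).cesaro
  have hbound := (((tendsto_inv_atTop_nhds_zero_nat (𝕜 := ℝ)).const_mul
    ((a + Real.log 2) / t)).const_add ((2 * D + 4) * t)).add (hexp.const_mul 2) |>.add
      (htail.const_mul 2)
  filter_upwards [hbound.eventually_lt_const (by simpa using htε), eventually_gt_atTop 0]
    with n hlt hn
  exact (average_integral_abs_integral_sub_integral_le hS hW hψ hψ_le hK ρ ht hn).trans_lt hlt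

end BoxDimension

section LipschitzDetermination

lemma exists_countable_isPiSystem_isClosed (S : Type*) [TopologicalSpace S]
    [SecondCountableTopology S] :
    ∃ C : Set (Set S), C.Countable ∧ IsPiSystem C ∧ (∀ F ∈ C, IsClosed F) ∧ Set.univ ∈ C ∧
      borel S = MeasurableSpace.generateFrom C := by
  obtain ⟨B, hB, -, hbasis⟩ := TopologicalSpace.exists_countable_basis S
  have := hB.to_subtype
  have hclosed (t : Finset B) : IsClosed (⋃ b ∈ t, (b : Set S))ᶜ :=
    (isOpen_biUnion fun b _ => hbasis.isOpen b.2).isClosed_compl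
  refine ⟨Set.range fun t : Finset B => (⋃ b ∈ t, (b : Set S))ᶜ, Set.countable_range _, ?_,
    Set.forall_mem_range.2 hclosed, ⟨∅, by simp⟩, le_antisymm ?_ ?_⟩
  · classical
    rintro _ ⟨t, rfl⟩ _ ⟨t', rfl⟩ -
    exact ⟨t ∪ t', by simp only [Finset.set_biUnion_union, Set.compl_union]⟩
  · rw [hbasis.borel_eq_generateFrom]
    refine MeasurableSpace.generateFrom_le fun b hb => ?_
    rw [← compl_compl b]
    refine MeasurableSet.compl (MeasurableSpace.measurableSet_generateFrom ?_)
    exact ⟨{⟨b, hb⟩}, by simp⟩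
  · refine MeasurableSpace.generateFrom_le (Set.forall_mem_range.2 fun t => ?_)
    borelize S
    exact (hclosed t).measurableSet

variable {Y S : Type*} [MeasurableSpace Y] {m : Measure Y} [PseudoMetricSpace S]
  [MeasurableSpace S] [BorelSpace S] {κ η : Y → Measure S}
  [∀ y, IsFiniteMeasure (κ y)] [∀ y, IsFiniteMeasure (η y)]

lemma ae_measure_eq_of_isClosed
    (h : ∀ (L : ℝ≥0) (φ : S → ℝ), LipschitzWith L φ → (∀ s, |φ s| ≤ 1) →
      ∀ᵐ y ∂m, ∫ s, φ s ∂κ y = ∫ s, φ s ∂η y)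
    {F : Set S} (hF : IsClosed F) : ∀ᵐ y ∂m, κ y F = η y F := by
  obtain ⟨δ, -, hδ_mem, hδ⟩ := exists_seq_strictAnti_tendsto' (zero_lt_one' ℝ)
  have hδ_pos (n : ℕ) : 0 < δ n := (hδ_mem n).1
  have hthick (n : ℕ) : ∀ᵐ y ∂m, ∫ s, (thickenedIndicator (hδ_pos n) F s : ℝ) ∂κ y =
      ∫ s, (thickenedIndicator (hδ_pos n) F s : ℝ) ∂η y :=
    h _ _ (NNReal.isometry_coe.lipschitz.comp (lipschitzWith_thickenedIndicator (hδ_pos n) F))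
      fun s => by simpa using thickenedIndicator_le_one (hδ_pos n) F s
  filter_upwards [ae_all_iff.2 hthick] with y hy
  have hlim := tendsto_integral_thickenedIndicator_of_isClosed (κ y) hF hδ_pos hδ
  simp only [hy] at hlim
  exact (measureReal_eq_measureReal_iff).1 (tendsto_nhds_unique hlim
    (tendsto_integral_thickenedIndicator_of_isClosed (η y) hF hδ_pos hδ))

theorem ae_eq_of_forall_lipschitz_ae_integral_eq [SecondCountableTopology S]
    (h : ∀ (L : ℝ≥0) (φ : S → ℝ), LipschitzWith L φ → (∀ s, |φ s| ≤ 1) →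
      ∀ᵐ y ∂m, ∫ s, φ s ∂κ y = ∫ s, φ s ∂η y) : ∀ᵐ y ∂m, κ y = η y := by
  obtain ⟨C, hC, hpi, hclosed, huniv, hgen⟩ := exists_countable_isPiSystem_isClosed S
  filter_upwards [(ae_ball_iff hC).2 fun F hF => ae_measure_eq_of_isClosed h (hclosed F hF)]
    with y hy
  exact ext_of_generate_finite C (BorelSpace.measurable_eq.trans hgen) hpi hy (hy _ huniv)

end LipschitzDetermination

section Cocycle

variable {G Z S : Type*} [Group G] [MeasurableSpace G] [MeasurableSpace Z] [MeasurableSpace S]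
  [MulAction G S]

section Pullback

variable [MeasurableSMul₂ G S] (ν : Kernel Z S) [IsMarkovKernel ν]

lemma stronglyMeasurable_integral_sub_integral_comp_smul {A : Z → G} (hA : Measurable A)
    {φ : S → ℝ} (hφ : Measurable φ) :
    StronglyMeasurable fun q : Z × Z => ∫ s, φ s ∂ν q.2 - ∫ s, φ (A q.1 • s) ∂ν q.1 := by
  have hsmul : Measurable fun q : Z × S => φ (A q.1 • q.2) := by fun_prop
  exact (hφ.stronglyMeasurable.integral_kernel.comp_measurable measurable_snd).sub
    (hsmul.stronglyMeasurable.integral_kernel_prod_right'.comp_measurable measurable_fst)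

variable [MeasurableInv G]

/-- The kernel `(g, z) ↦ g⁻¹_* ν z`. Along the chain of `cocycleKernel` it becomes the sequence of
measures `(A z_{n-1} * ⋯ * A z_0)⁻¹_* ν z_n`. -/
noncomputable def pullbackKernel : Kernel (G × Z) S :=
  (Kernel.deterministic Prod.fst measurable_fst ×ₖ ν.comap Prod.snd measurable_snd).map
    fun q => q.1⁻¹ • q.2

instance isMarkovKernel_pullbackKernel : IsMarkovKernel (pullbackKernel (G := G) ν) :=
  Kernel.IsMarkovKernel.map _ (by fun_prop)

lemma pullbackKernel_apply (p : G × Z) :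
    pullbackKernel ν p = (ν p.2).map (p.1⁻¹ • ·) := by
  rw [pullbackKernel, Kernel.map_apply _ (by fun_prop), Kernel.prod_apply,
    Kernel.deterministic_apply, Kernel.comap_apply, Measure.dirac_prod,
    Measure.map_map (by fun_prop) measurable_prodMk_left]
  rfl

lemma integral_comp_smul_pullbackKernel {φ : S → ℝ} (hφ : Measurable φ) (g : G)
    (p : G × Z) :
    ∫ s, φ (g • s) ∂pullbackKernel ν p = ∫ s, φ ((g * p.1⁻¹) • s) ∂ν p.2 := by
  have hφg : Measurable fun s => φ (g • s) := hφ.comp (measurable_const_smul g)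
  rw [pullbackKernel_apply, integral_map (by fun_prop) hφg.aestronglyMeasurable]
  simp only [mul_smul]

end Pullback

section Kernels

variable [MeasurableMul₂ G] (P : Kernel Z Z) {A : Z → G} (hA : Measurable A)

/-- The transition kernel `(g, z) ↦ (A z * g, y)` with `y` of law `P z`. It records the chain `z_n`
together with the cocycle `A z_{n-1} * ⋯ * A z_0`. -/
noncomputable def cocycleKernel : Kernel (G × Z) (G × Z) :=
  Kernel.deterministic (fun p => A p.2 * p.1) ((hA.comp measurable_snd).mul measurable_fst) ×ₖ
    P.comap Prod.snd measurable_snd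

instance isMarkovKernel_cocycleKernel [IsMarkovKernel P] : IsMarkovKernel (cocycleKernel P hA) := by
  unfold cocycleKernel
  infer_instance

variable [IsMarkovKernel P]

lemma cocycleKernel_apply (p : G × Z) :
    cocycleKernel P hA p = (P p.2).map (Prod.mk (A p.2 * p.1)) := by
  rw [cocycleKernel, Kernel.prod_apply, Kernel.deterministic_apply, Kernel.comap_apply,
    Measure.dirac_prod]

/-- The law of `(A z_{n-1} * ⋯ * A z_0, z_n)` when `z_0` has law `μ`. -/
noncomputable def cocycleLaw (μ : Measure Z) : ℕ → Measure (G × Z) :=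
  chainLaw (cocycleKernel P hA) (μ.map (Prod.mk 1))

variable (μ : Measure Z) [IsProbabilityMeasure μ]

instance isProbabilityMeasure_map_prodMk_one :
    IsProbabilityMeasure (μ.map (Prod.mk (1 : G))) :=
  Measure.isProbabilityMeasure_map measurable_prodMk_left.aemeasurable

instance isProbabilityMeasure_cocycleLaw (n : ℕ) :
    IsProbabilityMeasure (cocycleLaw P hA μ n) :=
  isProbabilityMeasure_chainLaw _ _ n

lemma ae_compProd_cocycleKernel [MeasurableEq G] (ρ : Measure (G × Z)) [SFinite ρ] :
    ∀ᵐ p ∂(ρ ⊗ₘ cocycleKernel P hA), p.2.1 = A p.1.2 * p.1.1 := by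
  have hset : MeasurableSet {p : (G × Z) × (G × Z) | p.2.1 = A p.1.2 * p.1.1} :=
    measurableSet_eq_fun (by fun_prop) (by fun_prop)
  refine (Measure.ae_compProd_iff hset).2 (.of_forall fun p => ?_)
  rw [cocycleKernel_apply]
  exact (ae_map_iff measurable_prodMk_left.aemeasurable
    (hset.preimage measurable_prodMk_left)).2 (.of_forall fun y => rfl)

variable {P μ}

lemma map_prodMap_snd_compProd_cocycleKernel (ρ : Measure (G × Z)) [SFinite ρ] :
    (ρ ⊗ₘ cocycleKernel P hA).map (Prod.map Prod.snd Prod.snd) = ρ.snd ⊗ₘ P := by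
  refine Measure.ext_of_lintegral _ fun f hf => ?_
  rw [lintegral_map hf (by fun_prop), Measure.lintegral_compProd (by fun_prop),
    Measure.lintegral_compProd hf, Measure.snd, lintegral_map (by fun_prop) measurable_snd]
  refine lintegral_congr fun p => ?_
  rw [cocycleKernel_apply, lintegral_map (by fun_prop) measurable_prodMk_left]
  rfl

lemma snd_cocycleLaw (hstat : P ∘ₘ μ = μ) (n : ℕ) : (cocycleLaw P hA μ n).snd = μ := by
  induction n with
  | zero =>
    rw [cocycleLaw, chainLaw, Measure.snd, Measure.map_map measurable_snd measurable_prodMk_left]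
    exact Measure.map_id
  | succ n ih =>
    calc (cocycleKernel P hA ∘ₘ cocycleLaw P hA μ n).snd
        = ((cocycleLaw P hA μ n ⊗ₘ cocycleKernel P hA).map (Prod.map Prod.snd Prod.snd)).snd := by
          rw [← Measure.snd_compProd, Measure.snd, Measure.snd, Measure.snd,
            Measure.map_map (by fun_prop) (by fun_prop),
            Measure.map_map (by fun_prop) (by fun_prop)]
          rfl
      _ = μ := by
          rw [map_prodMap_snd_compProd_cocycleKernel, ih, Measure.snd_compProd, hstat]

variable [MeasurableInv G] [MeasurableSMul₂ G S] {ν : Kernel Z S} [IsMarkovKernel ν]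

lemma pullbackKernel_comp_cocycleKernel
    (htwist : ∀ z, ν z = (ν ∘ₘ P z).map ((A z)⁻¹ • ·)) :
    pullbackKernel ν ∘ₖ cocycleKernel P hA = pullbackKernel ν := by
  ext p : 1
  refine Measure.ext_of_lintegral _ fun f hf => ?_
  rw [Kernel.comp_apply, Measure.lintegral_bind (Kernel.aemeasurable _) hf.aemeasurable,
    cocycleKernel_apply, lintegral_map (hf.lintegral_kernel) measurable_prodMk_left,
    pullbackKernel_apply, htwist, Measure.map_map (by fun_prop) (by fun_prop),
    lintegral_map hf (by fun_prop),
    Measure.lintegral_bind (Kernel.aemeasurable _) (by fun_prop)]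
  refine lintegral_congr fun y => ?_
  rw [pullbackKernel_apply, lintegral_map hf (by fun_prop)]
  simp only [mul_inv_rev, mul_smul, Function.comp_apply]

lemma integral_abs_integral_sub_pullbackKernel [MeasurableEq G] (hstat : P ∘ₘ μ = μ) {φ : S → ℝ}
    (hφ : Measurable φ) (n : ℕ) :
    ∫ p, |∫ s, φ (p.2.1 • s) ∂pullbackKernel ν p.2 - ∫ s, φ (p.2.1 • s) ∂pullbackKernel ν p.1|
        ∂(cocycleLaw P hA μ n ⊗ₘ cocycleKernel P hA) =
      ∫ q, |∫ s, φ s ∂ν q.2 - ∫ s, φ (A q.1 • s) ∂ν q.1| ∂(μ ⊗ₘ P) := by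
  have hmeas := (stronglyMeasurable_integral_sub_integral_comp_smul ν hA hφ).norm
  calc _ = ∫ p : (G × Z) × (G × Z), |∫ s, φ s ∂ν p.2.2 - ∫ s, φ (A p.1.2 • s) ∂ν p.1.2|
        ∂(cocycleLaw P hA μ n ⊗ₘ cocycleKernel P hA) := by
        refine integral_congr_ae ?_
        filter_upwards [ae_compProd_cocycleKernel P hA (cocycleLaw P hA μ n)] with p hp
        simp only [integral_comp_smul_pullbackKernel ν hφ, mul_inv_cancel, one_smul]
        simp only [hp, mul_inv_cancel_right]
    _ = _ := by
        conv_rhs => rw [← snd_cocycleLaw hA hstat n, ← map_prodMap_snd_compProd_cocycleKernel hA]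
        exact (integral_map (measurable_snd.prodMap measurable_snd).aemeasurable
          hmeas.aestronglyMeasurable).symm

end Kernels

section Invariance

variable [MeasurableMul₂ G] [MeasurableInv G] [MeasurableEq G] {P : Kernel Z Z} [IsMarkovKernel P]
  {A : Z → G} (hA : Measurable A) {μ : Measure Z} [IsProbabilityMeasure μ]
  [PseudoMetricSpace S] [BorelSpace S] [MeasurableSMul₂ G S] {ν : Kernel Z S} [IsMarkovKernel ν]
  {K : G → ℝ≥0} {a D : ℝ}

lemma ae_integral_comp_smul_eq (hstat : P ∘ₘ μ = μ)
    (htwist : ∀ z, ν z = (ν ∘ₘ P z).map ((A z)⁻¹ • ·)) (hS : HasBoxCountLE S a D)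
    (hK : Measurable K) (hlip : ∀ g, LipschitzWith (K g) (g • · : S → S))
    (hsub : SubexponentialInProbability (cocycleLaw P hA μ) fun p => K p.1)
    {L : ℝ≥0} {φ : S → ℝ} (hφ : LipschitzWith L φ) (hφ_le : ∀ s, |φ s| ≤ 1) :
    ∀ᵐ q ∂(μ ⊗ₘ P), ∫ s, φ (A q.1 • s) ∂ν q.1 = ∫ s, φ s ∂ν q.2 := by
  have hφm : Measurable φ := hφ.continuous.measurable
  have hcesaro := tendsto_average_integral_abs_integral_sub_integral hS
    (pullbackKernel_comp_cocycleKernel hA htwist) (ψ := fun p s => φ (p.1 • s))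
    (fun p => hφ.comp (hlip p.1)) (fun p s => hφ_le _) (by fun_prop) (μ.map (Prod.mk 1))
    (by simpa only [pow_one, cocycleLaw] using hsub.const_mul_pow L 1)
  have hdisc : ∫ q, |∫ s, φ s ∂ν q.2 - ∫ s, φ (A q.1 • s) ∂ν q.1| ∂(μ ⊗ₘ P) = 0 := by
    refine tendsto_nhds_unique (tendsto_const_nhds.congr' ?_) hcesaro
    filter_upwards [eventually_ne_atTop 0] with n hn
    have hconst (k : ℕ) := integral_abs_integral_sub_pullbackKernel (ν := ν) hA hstat hφm k
    simp only [cocycleLaw] at hconst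
    simp only [hconst, Finset.sum_const, Finset.card_range, nsmul_eq_mul]
    field_simp
  have hint : Integrable (fun q => |∫ s, φ s ∂ν q.2 - ∫ s, φ (A q.1 • s) ∂ν q.1|) (μ ⊗ₘ P) := by
    refine .of_bound
      (stronglyMeasurable_integral_sub_integral_comp_smul ν hA hφm).norm.aestronglyMeasurable 2
      (.of_forall fun q => ?_)
    rw [Real.norm_eq_abs, abs_abs, ← integral_map (φ := (A q.1 • ·)) (by fun_prop)
      hφm.aestronglyMeasurable]
    have := Measure.isProbabilityMeasure_map (μ := ν q.1) (f := (A q.1 • ·)) (by fun_prop)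
    exact abs_integral_sub_integral_le_two _ _ hφ_le
  filter_upwards [(integral_eq_zero_iff_of_nonneg (fun q => abs_nonneg _) hint).1 hdisc] with q hq
  exact (sub_eq_zero.1 (abs_eq_zero.1 hq)).symm

theorem ae_map_smul_eq_of_subexponential (hstat : P ∘ₘ μ = μ)
    (htwist : ∀ z, ν z = (ν ∘ₘ P z).map ((A z)⁻¹ • ·)) [SecondCountableTopology S]
    (hS : HasBoxCountLE S a D)
    (hK : Measurable K) (hlip : ∀ g, LipschitzWith (K g) (g • · : S → S))
    (hsub : SubexponentialInProbability (cocycleLaw P hA μ) fun p => K p.1) :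
    ∀ᵐ q ∂(μ ⊗ₘ P), (ν q.1).map (A q.1 • ·) = ν q.2 := by
  have (q : Z × Z) : IsFiniteMeasure ((ν q.1).map (A q.1 • · : S → S)) := inferInstance
  refine ae_eq_of_forall_lipschitz_ae_integral_eq fun L φ hφ hφ_le => ?_
  filter_upwards [ae_integral_comp_smul_eq hA hstat htwist hS hK hlip hsub hφ hφ_le] with q hq
  rw [integral_map (by fun_prop) hφ.continuous.measurable.aestronglyMeasurable, hq]

end Invariance
end Cocycle

section SphereBoxCount

lemma hasBoxCountLE_of_antilipschitzWith {S ι : Type*} [PseudoMetricSpace S] [MeasurableSpace S]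
    [Fintype ι] {C : ℝ≥0} {f : S → ι → ℝ} (hf : Measurable f) (hanti : AntilipschitzWith C f)
    (hf_le : ∀ x i, |f x i| ≤ 1) :
    HasBoxCountLE S (Fintype.card ι * Real.log (2 * C + 5)) (Fintype.card ι) := by
  classical
  intro s hs
  set m : ℕ := ⌈(C + 1) * Real.exp s⌉₊
  have hm : (C + 1) * Real.exp s ≤ m := Nat.le_ceil _
  have hm_pos : (0 : ℝ) < m := lt_of_lt_of_le (by positivity) hm
  have hm_le : (2 * m + 1 : ℝ) ≤ (2 * C + 5) * Real.exp s := by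
    have := Nat.ceil_lt_add_one (a := (C + 1) * Real.exp s) (by positivity)
    nlinarith [Real.one_le_exp hs]
  have hfloor (x : S) (i : ι) : ⌊m * f x i⌋ ∈ Finset.Icc (-m : ℤ) m := by
    have := abs_le.1 (hf_le x i)
    rw [Finset.mem_Icc, Int.le_floor]
    refine ⟨by push_cast; nlinarith, Int.floor_le_iff.2 (by push_cast; nlinarith)⟩
  let label (x : S) : ι → Finset.Icc (-m : ℤ) m := fun i => ⟨⌊m * f x i⌋, hfloor x i⟩
  have hlabel : Measurable label := measurable_pi_lambda _ fun i =>
    (((measurable_pi_iff.1 hf i).const_mul _).floor).subtype_mk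
  refine ⟨_, fun x => Fintype.equivFin _ (label x), Measurable.of_discrete.comp hlabel, ?_, ?_⟩
  · have hcard : ((Fintype.card (ι → Finset.Icc (-m : ℤ) m) : ℕ) : ℝ) =
        (2 * m + 1 : ℝ) ^ Fintype.card ι := by
      rw [Fintype.card_fun, Fintype.card_coe, Int.card_Icc,
        show ((m : ℤ) + 1 - -m).toNat = 2 * m + 1 by lia]
      push_cast
      rfl
    rw [hcard, Real.log_pow, ← mul_add]
    gcongr
    calc Real.log (2 * m + 1) ≤ Real.log ((2 * C + 5) * Real.exp s) := by gcongr
      _ = Real.log (2 * C + 5) + s := by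
          rw [Real.log_mul (by positivity) (by positivity), Real.log_exp]
  · intro x y hxy
    have hxy : label x = label y := (Fintype.equivFin _).injective hxy
    have hdist : dist (f x) (f y) ≤ (m : ℝ)⁻¹ := by
      refine (dist_pi_le_iff (by positivity)).2 fun i => ?_
      have := (Int.abs_sub_lt_one_of_floor_eq_floor (congr_arg Subtype.val (congr_fun hxy i))).le
      rw [← mul_sub, abs_mul, Nat.abs_cast] at this
      rwa [Real.dist_eq, ← one_div, le_div_iff₀' hm_pos]
    calc dist x y ≤ C * dist (f x) (f y) := hanti.le_mul_dist x y
      _ ≤ (m * Real.exp (-s)) * (m : ℝ)⁻¹ := by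
          gcongr
          rw [Real.exp_neg, ← div_eq_mul_inv, le_div_iff₀ (Real.exp_pos s)]
          nlinarith [Real.exp_pos s]
      _ = Real.exp (-s) := by field_simp

lemma exists_hasBoxCountLE_sphere (d : ℕ) :
    ∃ a D, HasBoxCountLE (Metric.sphere (0 : EuclideanSpace ℝ (Fin d)) 1) a D := by
  refine ⟨_, _, hasBoxCountLE_of_antilipschitzWith
    (f := fun x i => (x : EuclideanSpace ℝ (Fin d)) i) ?_
    ((PiLp.antilipschitzWith_ofLp 2 fun _ : Fin d => ℝ).comp
      (isometry_subtype_coe.antilipschitz)) fun x i => ?_⟩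
  · fun_prop
  · exact (PiLp.norm_apply_le (x : EuclideanSpace ℝ (Fin d)) i).trans_eq (norm_eq_of_mem_sphere x)

end SphereBoxCount

section SpecialLinearAction

open NormedSpace Matrix

lemma norm_normalize_le_one {V : Type*} [NormedAddCommGroup V] [NormedSpace ℝ V] (x : V) :
    ‖normalize x‖ ≤ 1 := by
  rcases eq_or_ne x 0 with rfl | hx
  · simp
  · exact (norm_normalize_eq_one_iff.2 hx).le

lemma norm_normalize_sub_normalize_le {V : Type*} [NormedAddCommGroup V] [NormedSpace ℝ V]
    {x : V} (hx : x ≠ 0) (y : V) :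
    ‖normalize x - normalize y‖ ≤ 2 * ‖x‖⁻¹ * ‖x - y‖ := by
  have hx' : ‖x‖ ≠ 0 := norm_ne_zero_iff.2 hx
  have hsplit : normalize x - normalize y = ‖x‖⁻¹ • ((x - y) - (‖x‖ - ‖y‖) • normalize y) := by
    rw [sub_smul, norm_smul_normalize, smul_sub, smul_sub, smul_sub, smul_smul,
      inv_mul_cancel₀ hx', one_smul, NormedSpace.normalize]
    abel
  calc ‖normalize x - normalize y‖ = ‖x‖⁻¹ * ‖(x - y) - (‖x‖ - ‖y‖) • normalize y‖ := by
        rw [hsplit, norm_smul, norm_inv, norm_norm]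
    _ ≤ ‖x‖⁻¹ * (‖x - y‖ + ‖x - y‖ * 1) := by
        gcongr
        refine (norm_sub_le _ _).trans ?_
        rw [norm_smul]
        gcongr
        · exact abs_norm_sub_norm_le x y
        · exact norm_normalize_le_one y
    _ = 2 * ‖x‖⁻¹ * ‖x - y‖ := by ring

lemma exists_norm_le_mul_norm_pow_of_homogeneous {V W : Type*} [NormedAddCommGroup V]
    [NormedSpace ℝ V] [ProperSpace V] [SeminormedAddCommGroup W] [NormedSpace ℝ W] {f : V → W}
    (hf : Continuous f) {k : ℕ} (hhom : ∀ (c : ℝ) x, f (c • x) = c ^ k • f x) :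
    ∃ C : ℝ≥0, ∀ x, ‖f x‖ ≤ C * ‖x‖ ^ k := by
  obtain ⟨C, hC⟩ := (isCompact_closedBall (0 : V) 1).exists_bound_of_continuousOn hf.continuousOn
  refine ⟨C.toNNReal, fun x => ?_⟩
  have hmem : normalize x ∈ Metric.closedBall (0 : V) 1 :=
    mem_closedBall_zero_iff.2 (norm_normalize_le_one x)
  calc ‖f x‖ = ‖x‖ ^ k * ‖f (normalize x)‖ := by
        rw [← Real.norm_of_nonneg (pow_nonneg (norm_nonneg x) k), ← norm_smul, ← hhom,
          norm_smul_normalize]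
    _ ≤ ‖x‖ ^ k * C.toNNReal := by gcongr; exact (hC _ hmem).trans (Real.le_coe_toNNReal C)
    _ = C.toNNReal * ‖x‖ ^ k := mul_comm _ _

variable {d : ℕ}

local notation "E" => EuclideanSpace ℝ (Fin d)
local notation "𝕊" => Metric.sphere (0 : E) 1
local notation "Mat" => Matrix (Fin d) (Fin d) ℝ
local notation "SL" => Matrix.SpecialLinearGroup (Fin d) ℝ

lemma continuous_toEuclideanLin :
    Continuous fun q : Mat × E => toEuclideanLin q.1 q.2 :=
  (PiLp.continuous_toLp 2 _).comp
    (Continuous.matrix_mulVec continuous_fst ((PiLp.continuous_ofLp 2 _).comp continuous_snd))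

lemma toEuclideanLin_inv_apply_apply (g : SL) (x : E) :
    toEuclideanLin (↑g⁻¹ : Mat) (toEuclideanLin (g : Mat) x) = x := by
  rw [← LinearMap.comp_apply, ← toLpLin_mul_same, ← Matrix.SpecialLinearGroup.coe_mul,
    inv_mul_cancel, Matrix.SpecialLinearGroup.coe_one, toLpLin_one, LinearMap.id_apply]

lemma toEuclideanLin_specialLinearGroup_ne_zero (g : SL) {x : E} (hx : x ≠ 0) :
    toEuclideanLin (g : Mat) x ≠ 0 := fun h =>
  hx (by rw [← toEuclideanLin_inv_apply_apply g x, h, map_zero])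

lemma coe_projAct (g : SL) (v : 𝕊) :
    (projAct (g : Mat) v : E) = normalize (toEuclideanLin (g : Mat) v.val) := by
  have hv := toEuclideanLin_specialLinearGroup_ne_zero g (ne_zero_of_mem_unit_sphere v)
  unfold projAct
  split_ifs with h
  · exact absurd h hv
  · rfl

/-- The action `g • v = g v / ‖g v‖` of the special linear group on the unit sphere. -/
noncomputable instance mulActionSphere : MulAction SL 𝕊 where
  smul g := projAct (g : Mat)
  one_smul v := Subtype.ext <| by
    refine (coe_projAct 1 v).trans ?_
    rw [Matrix.SpecialLinearGroup.coe_one, toLpLin_one, LinearMap.id_apply,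
      normalize_eq_self_of_norm_eq_one (norm_eq_of_mem_sphere v)]
  mul_smul g h v := Subtype.ext <| by
    refine (coe_projAct (g * h) v).trans (Eq.trans ?_ (coe_projAct g (projAct (h : Mat) v)).symm)
    have hpos : 0 < ‖toEuclideanLin (h : Mat) v.val‖⁻¹ := inv_pos.2 <| norm_pos_iff.2 <|
      toEuclideanLin_specialLinearGroup_ne_zero h (ne_zero_of_mem_unit_sphere v)
    rw [coe_projAct, Matrix.SpecialLinearGroup.coe_mul, toLpLin_mul_same, LinearMap.comp_apply]
    exact ((congr_arg NormedSpace.normalize (map_smul _ _ _)).trans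
      (normalize_smul_of_pos hpos _)).symm

lemma coe_smul_sphere (g : SL) (v : 𝕊) :
    ((g • v : 𝕊) : E) = normalize (toEuclideanLin (g : Mat) v.val) :=
  coe_projAct g v

instance continuousSMul_sphere : ContinuousSMul SL 𝕊 where
  continuous_smul := by
    have hval : Continuous fun g : SL => (g : Mat) := continuous_subtype_val
    have hlin : Continuous fun q : SL × 𝕊 => toEuclideanLin (q.1 : Mat) q.2.val :=
      continuous_toEuclideanLin.comp (hval.prodMap continuous_subtype_val)
    have hcoe : Continuous fun q : SL × 𝕊 => ((q.1 • q.2 : 𝕊) : E) := by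
      simp only [coe_smul_sphere, NormedSpace.normalize]
      exact (hlin.norm.inv₀ fun q => norm_ne_zero_iff.2 <|
        toEuclideanLin_specialLinearGroup_ne_zero q.1 (ne_zero_of_mem_unit_sphere q.2)).smul hlin
    exact hcoe.subtype_mk _

open scoped Matrix.Norms.L2Operator

lemma matOpNorm_eq_norm (M : Mat) : matOpNorm M = ‖M‖ := rfl

lemma norm_toEuclideanLin_le (M : Mat) (x : E) :
    ‖toEuclideanLin M x‖ ≤ ‖M‖ * ‖x‖ :=
  l2_opNorm_mulVec M x

lemma lipschitzWith_smul_sphere (g : SL) :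
    LipschitzWith (2 * ‖(↑g⁻¹ : Mat)‖₊ * ‖(g : Mat)‖₊) (g • · : 𝕊 → 𝕊) := by
  refine LipschitzWith.of_dist_le_mul fun v w => ?_
  have hv : toEuclideanLin (g : Mat) v.val ≠ 0 :=
    toEuclideanLin_specialLinearGroup_ne_zero g (ne_zero_of_mem_unit_sphere v)
  have hinv : ‖toEuclideanLin (g : Mat) v.val‖⁻¹ ≤ ‖(↑g⁻¹ : Mat)‖ := by
    rw [inv_le_iff_one_le_mul₀ (norm_pos_iff.2 hv)]
    simpa only [toEuclideanLin_inv_apply_apply, norm_eq_of_mem_sphere] using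
      norm_toEuclideanLin_le (↑g⁻¹ : Mat) (toEuclideanLin (g : Mat) v.val)
  calc dist (g • v) (g • w)
      = ‖normalize (toEuclideanLin (g : Mat) v.val) -
          normalize (toEuclideanLin (g : Mat) w.val)‖ := by
        rw [Subtype.dist_eq, dist_eq_norm, coe_smul_sphere, coe_smul_sphere]
    _ ≤ 2 * ‖toEuclideanLin (g : Mat) v.val‖⁻¹ * ‖toEuclideanLin (g : Mat) (v.val - w.val)‖ := by
        rw [map_sub]; exact norm_normalize_sub_normalize_le hv _
    _ ≤ 2 * ‖(↑g⁻¹ : Mat)‖ * (‖(g : Mat)‖ * ‖v.val - w.val‖) := by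
        gcongr; exact norm_toEuclideanLin_le _ _
    _ = _ := by rw [Subtype.dist_eq, dist_eq_norm]; push_cast; ring

lemma exists_norm_inv_specialLinearGroup_le :
    ∃ C : ℝ≥0, ∀ g : SL,
      ‖(↑g⁻¹ : Mat)‖ ≤ C * ‖(g : Mat)‖ ^ (d - 1) := by
  obtain ⟨C, hC⟩ := exists_norm_le_mul_norm_pow_of_homogeneous
    (f := adjugate (n := Fin d) (α := ℝ)) (k := d - 1) (by fun_prop)
    (fun c M => by simpa using adjugate_smul c M)
  exact ⟨C, fun g => by rw [Matrix.SpecialLinearGroup.coe_inv]; exact hC g⟩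

lemma exists_lipschitzWith_smul_sphere :
    ∃ C : ℝ≥0, ∀ g : SL, LipschitzWith (C * ‖(g : Mat)‖₊ ^ (d - 1 + 1))
      (g • · : 𝕊 → 𝕊) := by
  obtain ⟨C, hC⟩ := exists_norm_inv_specialLinearGroup_le (d := d)
  refine ⟨2 * C, fun g => (lipschitzWith_smul_sphere g).weaken ?_⟩
  calc 2 * ‖(↑g⁻¹ : Mat)‖₊ * ‖(g : Mat)‖₊
      ≤ 2 * (C * ‖(g : Mat)‖₊ ^ (d - 1)) * ‖(g : Mat)‖₊ := by gcongr; exact hC g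
    _ = 2 * C * ‖(g : Mat)‖₊ ^ (d - 1 + 1) := by ring

/-- The Borel `σ`-algebra of the topology induced by the matrix entries. -/
instance measurableSpaceSpecialLinearGroup : MeasurableSpace SL := borel _

instance borelSpace_specialLinearGroup : BorelSpace SL := ⟨rfl⟩

instance secondCountableTopology_specialLinearGroup : SecondCountableTopology SL :=
  inferInstanceAs (SecondCountableTopology (Subtype _))

theorem ae_map_smul_sphere_eq_of_subexponential {Z : Type*} [MeasurableSpace Z]
    {P : Kernel Z Z} [IsMarkovKernel P] {μ : Measure Z} [IsProbabilityMeasure μ] {A : Z → SL}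
    {ν : Kernel Z 𝕊} [IsMarkovKernel ν] (hA : Measurable A) (hstat : P ∘ₘ μ = μ)
    (htwist : ∀ z, ν z = (ν ∘ₘ P z).map ((A z)⁻¹ • ·))
    (hsub : SubexponentialInProbability (cocycleLaw P hA μ) fun p : SL × Z => ‖(p.1 : Mat)‖₊) :
    ∀ᵐ q ∂(μ ⊗ₘ P), (ν q.1).map (A q.1 • ·) = ν q.2 := by
  obtain ⟨a, D, hbox⟩ := exists_hasBoxCountLE_sphere d
  obtain ⟨C, hlip⟩ := exists_lipschitzWith_smul_sphere (d := d)
  have hval : Continuous fun g : SL => (g : Mat) := continuous_subtype_val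
  have hmeas : Measurable fun g : SL => C * ‖(g : Mat)‖₊ ^ (d - 1 + 1) :=
    ((hval.nnnorm.pow _).const_mul C).measurable
  exact ae_map_smul_eq_of_subexponential hA hstat htwist hbox hmeas hlip (hsub.const_mul_pow C _)

end SpecialLinearAction

section Lyapunov

lemma measurable_of_lintegral_recursion {X : Type*} [MeasurableSpace X] {Q : Kernel X X}
    {h : ℕ → X → ℝ≥0∞} (h_zero : Measurable (h 0))
    (h_succ : ∀ n x, h (n + 1) x = ∫⁻ y, h n y ∂Q x) (n : ℕ) : Measurable (h n) := by
  induction n with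
  | zero => exact h_zero
  | succ n ih => exact (funext (h_succ n)) ▸ ih.lintegral_kernel

lemma lintegral_eq_lintegral_chainLaw_of_recursion {X : Type*} [MeasurableSpace X]
    {Q : Kernel X X} {h : ℕ → X → ℝ≥0∞} (h_zero : Measurable (h 0))
    (h_succ : ∀ n x, h (n + 1) x = ∫⁻ y, h n y ∂Q x) (ρ : Measure X) (n : ℕ) :
    ∫⁻ x, h n x ∂ρ = ∫⁻ x, h 0 x ∂chainLaw Q ρ n := by
  suffices ∀ k, ∫⁻ x, h n x ∂chainLaw Q ρ k = ∫⁻ x, h 0 x ∂chainLaw Q ρ (k + n) by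
    simpa only [chainLaw, zero_add] using this 0
  induction n with
  | zero => exact fun k => rfl
  | succ n ih =>
    intro k
    rw [show k + (n + 1) = k + 1 + n by ring, ← ih, chainLaw, Measure.lintegral_bind
      Q.aemeasurable (measurable_of_lintegral_recursion h_zero h_succ n).aemeasurable]
    exact lintegral_congr (h_succ n)

lemma subexponentialInProbability_of_tendsto_lintegral_log {X : Type*} [MeasurableSpace X]
    {ρ : ℕ → Measure X} {K : X → ℝ≥0} (hK : Measurable K)
    (hlog : Tendsto (fun n : ℕ => (∫⁻ x, ENNReal.ofReal (Real.log (K x)) ∂ρ n) / n) atTop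
      (nhds 0)) :
    SubexponentialInProbability ρ K := by
  intro δ hδ
  have hlim : Tendsto (fun n : ℕ => (∫⁻ x, ENNReal.ofReal (Real.log (K x)) ∂ρ n) / n /
      ENNReal.ofReal δ) atTop (nhds 0) := by
    simpa only [ENNReal.zero_div] using
      ENNReal.Tendsto.div_const hlog (.inr (ENNReal.ofReal_pos.2 hδ).ne')
  suffices Tendsto (fun n => ρ n {x | Real.exp (δ * n) < K x}) atTop (nhds 0) by
    exact (ENNReal.tendsto_toReal ENNReal.zero_ne_top).comp this
  refine tendsto_of_tendsto_of_tendsto_of_le_of_le' tendsto_const_nhds hlim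
    (.of_forall fun n => zero_le) ?_
  filter_upwards [eventually_gt_atTop 0] with n hn
  have hδn : 0 < δ * n := by positivity
  have hsubset : {x | Real.exp (δ * n) < K x} ⊆
      {x | ENNReal.ofReal (δ * n) ≤ ENNReal.ofReal (Real.log (K x))} := fun x hx =>
    ENNReal.ofReal_le_ofReal ((Real.le_log_iff_exp_le ((Real.exp_pos _).trans hx)).2 hx.le)
  calc ρ n {x | Real.exp (δ * n) < K x}
      ≤ ρ n {x | ENNReal.ofReal (δ * n) ≤ ENNReal.ofReal (Real.log (K x))} :=
        measure_mono hsubset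
    _ ≤ (∫⁻ x, ENNReal.ofReal (Real.log (K x)) ∂ρ n) / ENNReal.ofReal (δ * n) :=
        meas_ge_le_lintegral_div (by fun_prop) (ENNReal.ofReal_pos.2 hδn).ne' ENNReal.ofReal_ne_top
    _ = (∫⁻ x, ENNReal.ofReal (Real.log (K x)) ∂ρ n) / n / ENNReal.ofReal δ := by
        rw [mul_comm δ, ENNReal.ofReal_mul n.cast_nonneg, ENNReal.ofReal_natCast,
          div_eq_mul_inv, div_eq_mul_inv, div_eq_mul_inv,
          ENNReal.mul_inv (.inl (by simpa using hn.ne')) (.inl (ENNReal.natCast_ne_top n)),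
          mul_assoc]

end Lyapunov

section Main

open scoped Matrix.Norms.L2Operator

variable {d : ℕ}

local notation "Mat" => Matrix (Fin d) (Fin d) ℝ
local notation "SL" => Matrix.SpecialLinearGroup (Fin d) ℝ

lemma measurable_specialLinearGroup_of_entries {Z : Type*} [MeasurableSpace Z] {A : Z → SL}
    (hA : ∀ i j, Measurable fun z => (A z : Mat) i j) : Measurable A := by
  have hmat : Measurable fun z i j => (A z : Mat) i j :=
    measurable_pi_lambda _ fun i => measurable_pi_lambda _ fun j => hA i j
  have hborel : (measurableSpaceSpecialLinearGroup : MeasurableSpace SL) =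
      MeasurableSpace.comap (fun (g : SL) i j => (g : Mat) i j) MeasurableSpace.pi := by
    rw [BorelSpace.measurable_eq (α := Fin d → Fin d → ℝ)]
    exact borel_comap
  rw [hborel]
  exact measurable_comap_iff.2 hmat

lemma coe_inv_specialLinearGroup (g : SL) : ((g⁻¹ : SL) : Mat) = (g : Mat)⁻¹ := by
  rw [Matrix.SpecialLinearGroup.coe_inv, Matrix.inv_def, g.det_coe, Ring.inverse_one, one_smul]

lemma subexponentialInProbability_norm_cocycleLaw {Z : Type*} [MeasurableSpace Z]
    {P : Kernel Z Z} [IsMarkovKernel P] {μ : Measure Z} {A : Z → SL} (hA : Measurable A)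
    {g : ℕ → Mat → Z → ℝ≥0∞} (hg0 : ∀ M z, g 0 M z = ENNReal.ofReal (Real.log ‖M‖))
    (hgs : ∀ n M z, g (n + 1) M z = ∫⁻ y, g n (A z * M) y ∂(P z))
    (hlyap : Tendsto (fun n : ℕ => (∫⁻ z, g n 1 z ∂μ) / n) atTop (nhds 0)) :
    SubexponentialInProbability (cocycleLaw P hA μ) fun p : SL × Z => ‖(p.1 : Mat)‖₊ := by
  have hval : Continuous fun g : SL => (g : Mat) := continuous_subtype_val
  have hnorm : Measurable fun p : SL × Z => ‖(p.1 : Mat)‖₊ :=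
    hval.nnnorm.measurable.comp measurable_fst
  let h (n : ℕ) (p : SL × Z) : ℝ≥0∞ := g n (p.1 : Mat) p.2
  have h_zero : h 0 = fun p => ENNReal.ofReal (Real.log ‖(p.1 : Mat)‖₊) :=
    funext fun p => hg0 _ _
  have h_zero_meas : Measurable (h 0) := h_zero ▸ by fun_prop
  have h_succ (n : ℕ) (p : SL × Z) : h (n + 1) p = ∫⁻ q, h n q ∂cocycleKernel P hA p := by
    rw [cocycleKernel_apply, (measurableEmbedding_prodMk_left _).lintegral_map]
    exact hgs n _ _
  refine subexponentialInProbability_of_tendsto_lintegral_log hnorm (hlyap.congr fun n => ?_)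
  congr 1
  calc ∫⁻ z, g n 1 z ∂μ = ∫⁻ p, h n p ∂μ.map (Prod.mk 1) :=
        ((measurableEmbedding_prodMk_left (1 : SL)).lintegral_map (h n)).symm
    _ = ∫⁻ p, h 0 p ∂cocycleLaw P hA μ n :=
        lintegral_eq_lintegral_chainLaw_of_recursion h_zero_meas h_succ _ n
    _ = _ := lintegral_congr fun p => hg0 _ _

theorem markov_furstenberg_criterion_general
    {Z : Type*} [MeasurableSpace Z] (P : Kernel Z Z) [IsMarkovKernel P]
    (μ : Measure Z) [IsProbabilityMeasure μ] (hstat : μ.bind (fun z => P z) = μ)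
    (d : ℕ) (A : Z → Matrix (Fin d) (Fin d) ℝ) (hAmeas : ∀ i j, Measurable fun z => A z i j)
    (hAdet : ∀ z, (A z).det = 1)
    (ν : Z → Measure (Metric.sphere (0 : EuclideanSpace ℝ (Fin d)) 1))
    (hνprob : ∀ z, IsProbabilityMeasure (ν z))
    (hνmeas : ∀ E, MeasurableSet E → Measurable fun z => ν z E)
    (htwist : ∀ z, ν z = Measure.map (projAct (A z)⁻¹) ((P z).bind ν))
    (g : ℕ → Matrix (Fin d) (Fin d) ℝ → Z → ℝ≥0∞)
    (hg0 : ∀ M z, g 0 M z = ENNReal.ofReal (Real.log (matOpNorm M)))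
    (hgs : ∀ n M z, g (n + 1) M z = ∫⁻ y, g n (A z * M) y ∂(P z))
    (hlyap : Tendsto (fun n : ℕ => (∫⁻ z, g n 1 z ∂μ) / (n : ℝ≥0∞)) atTop (nhds 0)) :
    ∀ᵐ p ∂(μ.compProd P), (ν p.1).map (projAct (A p.1)) = ν p.2 := by
  let B (z : Z) : Matrix.SpecialLinearGroup (Fin d) ℝ := ⟨A z, hAdet z⟩
  have hB : Measurable B := measurable_specialLinearGroup_of_entries hAmeas
  let κ : Kernel Z (Metric.sphere (0 : EuclideanSpace ℝ (Fin d)) 1) :=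
    ⟨ν, Measure.measurable_of_measurable_coe ν hνmeas⟩
  have : IsMarkovKernel κ := ⟨hνprob⟩
  have htwist_smul (z : Z) : κ z = (κ ∘ₘ P z).map ((B z)⁻¹ • ·) := by
    refine (htwist z).trans ?_
    rw [← coe_inv_specialLinearGroup (B z)]
    rfl
  simp only [matOpNorm_eq_norm] at hg0
  have hsub := subexponentialInProbability_norm_cocycleLaw hB hg0 hgs hlyap
  filter_upwards [ae_map_smul_sphere_eq_of_subexponential hB hstat htwist_smul hsub] with p hp
  exact hp

end Main

/-- **A Markovian version of Furstenberg's criterion.**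
Let `P` be a Markov kernel on a standard Borel space `Z` with stationary probability
measure `μ`, and let `A : Z → SL(d,ℝ)` be measurable.  Suppose `ν : Z → 𝒫(S^{d-1})` is a
measurable family of probability measures on the sphere satisfying the twisted pullback
condition `ν_z = (A(z)⁻¹)_* ∫ ν_y P(z,dy)`.  Here `g n M z` denotes the expected value of
`log‖A(z_{n-1}) ⋯ A(z₀) M‖` along the chain started at `z₀ = z`, so that the top Lyapunov
exponent is `λ⁺ = lim (1/n) ∫ g n 1 z μ(dz)`.  If `λ⁺` exists and equals `0`, then the
family is almost surely invariant: `A(z₀)_* ν_{z₀} = ν_{z₁}` for `P(z₀,dz₁)μ(dz₀)`-almost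
every `(z₀, z₁)`. -/
theorem markov_furstenberg_criterion
    {Z : Type} [MeasurableSpace Z] [StandardBorelSpace Z]
    (P : Kernel Z Z) [IsMarkovKernel P]
    (μ : Measure Z) [IsProbabilityMeasure μ]
    (hstat : μ.bind (fun z => P z) = μ)
    (d : ℕ) (hd : 1 ≤ d)
    (A : Z → Matrix (Fin d) (Fin d) ℝ)
    (hAmeas : ∀ i j, Measurable fun z => A z i j)
    (hAdet : ∀ z, (A z).det = 1)
    (ν : Z → Measure (Metric.sphere (0 : EuclideanSpace ℝ (Fin d)) 1))
    (hνprob : ∀ z, IsProbabilityMeasure (ν z))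
    (hνmeas : ∀ E, MeasurableSet E → Measurable fun z => ν z E)
    (htwist : ∀ z, ν z = Measure.map (projAct (A z)⁻¹) ((P z).bind ν))
    (g : ℕ → Matrix (Fin d) (Fin d) ℝ → Z → ℝ≥0∞)
    (hg0 : ∀ M z, g 0 M z = ENNReal.ofReal (Real.log (matOpNorm M)))
    (hgs : ∀ n M z, g (n + 1) M z = ∫⁻ y, g n (A z * M) y ∂(P z))
    (hlyap : Tendsto (fun n : ℕ => (∫⁻ z, g n 1 z ∂μ) / (n : ℝ≥0∞)) atTop (nhds 0)) :
    ∀ᵐ p ∂(μ.compProd P), (ν p.1).map (projAct (A p.1)) = ν p.2 := by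
  exact markov_furstenberg_criterion_general P μ hstat d A hAmeas hAdet ν hνprob hνmeas htwist
    g hg0 hgs hlyap
end

section
/- Let (X, 𝓕, ρ) be a standard Borel probability space, let T : X → X be measurable with T_*ρ = ρ, let d ≥ 1, and let B : X → SL(d,ℝ) be measurable. For M ∈ SL(d,ℝ) let M act on the unit sphere S^{d−1} ⊆ ℝ^d by v ↦ Mv/|Mv|, and define the extended dynamics T̂ : X × S^{d−1} → X × S^{d−1} by T̂(x,v) := (Tx, B(x)v). Let γ : X → 𝒫(S^{d−1}) be a measurable family of probability measures such that the measure γ_x(dv)ρ(dx) on X × S^{d−1} is invariant under T̂. Define λ⁺ := lim_{n→∞} (1/n) ∫ log‖B(T^{n−1}x) ⋯ B(Tx) B(x)‖ ρ(dx), where ‖·‖ is the operator norm (note log‖M‖ ≥ 0 for M ∈ SL(d,ℝ), so the integrals are well defined in [0,∞]). If this limit exists and equals 0, then B(x)_* γ_x = γ_{Tx} for ρ-almost every x ∈ X. -/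
open MeasureTheory Filter
open scoped ENNReal

/-!
Partition the fibre into `N` small cells and consider, for each `n`, the pullback of this partition
by the `n`-th iterate of the skew product. Invariance says that the cell distribution over `y` is
the average, over the points `x` with `T x = y`, of the distributions over `x` of the cells pulled
back once more. By concavity the mean entropy therefore decreases in `n`, and by Pinsker's
inequality each decrease controls the mean square distance between the two distributions. The
decreases add up to at most `log (2 * N)`. A vanishing exponent prevents the iterates from
contracting the fibres exponentially, so cells of diameter `exp (-2 * η * n)` pull back, for times
up to `n` and up to a set of small measure, to cells of diameter `exp (-η * n)`. As
`log N = O(η * n)`, dividing by `n` bounds the mean square defect of `(b x)_* κ x = κ (T x)` by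
`O(η)` for every `η > 0`.
-/

section Entropy

variable {X ι : Type*} [MeasurableSpace X] [Fintype ι]

lemma sq_sqrt_sub_sqrt_le {a b : ℝ} (ha : 0 ≤ a) (hb : 0 < b) :
    (√a - √b) ^ 2 ≤ a * (Real.log a - Real.log b) - a + b := by
  obtain rfl | ha := ha.eq_or_lt
  · simp [Real.sq_sqrt hb.le]
  have hlog : Real.log √b - Real.log √a ≤ √b / √a - 1 := by
    rw [← Real.log_div (Real.sqrt_pos.2 hb).ne' (Real.sqrt_pos.2 ha).ne']
    exact Real.log_le_sub_one_of_pos (by positivity)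
  rw [Real.log_sqrt hb.le, Real.log_sqrt ha.le] at hlog
  have hmul : a * (√b / √a) = √a * √b := by
    rw [mul_div_left_comm, Real.div_sqrt, mul_comm]
  nlinarith [mul_le_mul_of_nonneg_left hlog ha.le, Real.sq_sqrt ha.le, Real.sq_sqrt hb.le]

lemma sum_sq_sqrt_add_sqrt_le {p q : ι → ℝ} (hp : ∀ i, 0 ≤ p i) (hq : ∀ i, 0 ≤ q i)
    (hp_sum : ∑ i, p i = 1) (hq_sum : ∑ i, q i = 1) :
    ∑ i, (√(p i) + √(q i)) ^ 2 ≤ 4 :=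
  calc ∑ i, (√(p i) + √(q i)) ^ 2
      ≤ ∑ i, 2 * (p i + q i) := Finset.sum_le_sum fun i _ => by
        simpa only [Real.sq_sqrt (hp i), Real.sq_sqrt (hq i)] using
          add_sq_le (a := √(p i)) (b := √(q i))
    _ = 4 := by rw [← Finset.mul_sum, Finset.sum_add_distrib, hp_sum, hq_sum]; norm_num

lemma sum_sq_sqrt_sub_sqrt_le {p q : ι → ℝ} (hp : ∀ i, 0 ≤ p i) (hq : ∀ i, 0 < q i)
    (hp_sum : ∑ i, p i = 1) (hq_sum : ∑ i, q i = 1) :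
    ∑ i, (√(p i) - √(q i)) ^ 2 ≤ ∑ i, p i * (Real.log (p i) - Real.log (q i)) :=
  calc ∑ i, (√(p i) - √(q i)) ^ 2
      ≤ ∑ i, (p i * (Real.log (p i) - Real.log (q i)) - p i + q i) :=
        Finset.sum_le_sum fun i _ => sq_sqrt_sub_sqrt_le (hp i) (hq i)
    _ = ∑ i, p i * (Real.log (p i) - Real.log (q i)) := by
        rw [Finset.sum_add_distrib, Finset.sum_sub_distrib, hp_sum, hq_sum, sub_add_cancel]

/-- The cross entropy `-∑ p log q`, in nats, of probability vectors on a finite type; the Shannon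
entropy of `p` is `crossEntropy p p`. -/
noncomputable def crossEntropy (p q : ι → ℝ) : ℝ :=
  ∑ i, p i * -Real.log (q i)

lemma le_one_of_sum_eq_one {p : ι → ℝ} (hp : ∀ i, 0 ≤ p i) (hp_sum : ∑ i, p i = 1) (i : ι) :
    p i ≤ 1 :=
  hp_sum ▸ Finset.single_le_sum (fun j _ => hp j) (Finset.mem_univ i)

lemma crossEntropy_nonneg {p q : ι → ℝ} (hp : ∀ i, 0 ≤ p i) (hq : ∀ i, 0 ≤ q i)
    (hq_sum : ∑ i, q i = 1) : 0 ≤ crossEntropy p q :=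
  Finset.sum_nonneg fun i _ => mul_nonneg (hp i) <|
    neg_nonneg.2 <| Real.log_nonpos (hq i) (le_one_of_sum_eq_one hq hq_sum i)

lemma crossEntropy_le {p q : ι → ℝ} {ε : ℝ} (hε : 0 < ε) (hp : ∀ i, 0 ≤ p i)
    (hp_sum : ∑ i, p i = 1) (hq : ∀ i, ε ≤ q i) : crossEntropy p q ≤ -Real.log ε :=
  calc crossEntropy p q
      ≤ ∑ i, p i * -Real.log ε := Finset.sum_le_sum fun i _ =>
        mul_le_mul_of_nonneg_left (neg_le_neg (Real.log_le_log hε (hq i))) (hp i)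
    _ = -Real.log ε := by rw [← Finset.sum_mul, hp_sum, one_mul]

theorem sq_sum_abs_sub_le_crossEntropy_sub {p q : ι → ℝ} (hp : ∀ i, 0 ≤ p i)
    (hq : ∀ i, 0 < q i) (hp_sum : ∑ i, p i = 1) (hq_sum : ∑ i, q i = 1) :
    (∑ i, |p i - q i|) ^ 2 ≤ 4 * (crossEntropy p q - crossEntropy p p) := by
  have hfactor (i : ι) : |p i - q i| = (√(p i) + √(q i)) * |√(p i) - √(q i)| := by
    rw [← abs_of_nonneg (add_nonneg (Real.sqrt_nonneg (p i)) (Real.sqrt_nonneg (q i))),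
      ← abs_mul, ← sq_sub_sq, Real.sq_sqrt (hp i), Real.sq_sqrt (hq i).le]
  have hrelative : ∑ i, p i * (Real.log (p i) - Real.log (q i)) =
      crossEntropy p q - crossEntropy p p := by
    rw [crossEntropy, crossEntropy, ← Finset.sum_sub_distrib]
    exact Finset.sum_congr rfl fun i _ => by ring
  calc (∑ i, |p i - q i|) ^ 2
      = (∑ i, (√(p i) + √(q i)) * |√(p i) - √(q i)|) ^ 2 := by simp only [hfactor]
    _ ≤ (∑ i, (√(p i) + √(q i)) ^ 2) * ∑ i, (√(p i) - √(q i)) ^ 2 := by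
        simpa only [sq_abs] using Finset.sum_mul_sq_le_sq_mul_sq Finset.univ
          (fun i => √(p i) + √(q i)) fun i => |√(p i) - √(q i)|
    _ ≤ 4 * (crossEntropy p q - crossEntropy p p) :=
        mul_le_mul (sum_sq_sqrt_add_sqrt_le hp (fun i => (hq i).le) hp_sum hq_sum)
          ((sum_sq_sqrt_sub_sqrt_le hp hq hp_sum hq_sum).trans_eq hrelative)
          (Finset.sum_nonneg fun i _ => sq_nonneg _) zero_le_four

lemma integrable_crossEntropy {ρ : Measure X} [IsFiniteMeasure ρ] {p q : X → ι → ℝ} {ε : ℝ}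
    (hε : 0 < ε) (hp_meas : ∀ i, Measurable fun x => p x i)
    (hq_meas : ∀ i, Measurable fun x => q x i) (hp : ∀ x i, 0 ≤ p x i)
    (hq : ∀ x i, ε ≤ q x i) (hp_sum : ∀ x, ∑ i, p x i = 1) (hq_sum : ∀ x, ∑ i, q x i = 1) :
    Integrable (fun x => crossEntropy (p x) (q x)) ρ := by
  have hmeas : Measurable fun x => crossEntropy (p x) (q x) :=
    Finset.measurable_fun_sum _ fun i _ =>
      (hp_meas i).mul (Real.measurable_log.comp (hq_meas i)).neg
  refine .of_bound hmeas.aestronglyMeasurable (-Real.log ε) <| .of_forall fun x => ?_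
  rw [Real.norm_of_nonneg
    (crossEntropy_nonneg (hp x) (fun i => hε.le.trans (hq x i)) (hq_sum x))]
  exact crossEntropy_le hε (hp x) (hp_sum x) (hq x)

theorem integral_sq_sum_abs_sub_le_entropy_drop {ρ : Measure X} [IsFiniteMeasure ρ]
    {T : X → X} (hT : Measurable T) {p q : X → ι → ℝ} {ε : ℝ} (hε : 0 < ε)
    (hp_meas : ∀ i, Measurable fun x => p x i) (hq_meas : ∀ i, Measurable fun x => q x i)
    (hp : ∀ x i, ε ≤ p x i) (hq : ∀ x i, ε ≤ q x i)
    (hp_sum : ∀ x, ∑ i, p x i = 1) (hq_sum : ∀ x, ∑ i, q x i = 1)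
    (htransfer : ∫ x, crossEntropy (p x) (q (T x)) ∂ρ = ∫ x, crossEntropy (q x) (q x) ∂ρ) :
    ∫ x, (∑ i, |p x i - q (T x) i|) ^ 2 ∂ρ ≤
      4 * (∫ x, crossEntropy (q x) (q x) ∂ρ - ∫ x, crossEntropy (p x) (p x) ∂ρ) := by
  have hp_nonneg (x : X) (i : ι) : 0 ≤ p x i := hε.le.trans (hp x i)
  have hcross : Integrable (fun x => crossEntropy (p x) (q (T x))) ρ :=
    integrable_crossEntropy hε hp_meas (fun i => (hq_meas i).comp hT) hp_nonneg
      (fun x => hq (T x)) hp_sum fun x => hq_sum (T x)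
  have hself : Integrable (fun x => crossEntropy (p x) (p x)) ρ :=
    integrable_crossEntropy hε hp_meas hp_meas hp_nonneg hp hp_sum hp_sum
  rw [← htransfer, ← integral_sub hcross hself, ← integral_const_mul]
  refine integral_mono_of_nonneg (.of_forall fun x => sq_nonneg _)
    ((hcross.sub hself).const_mul 4) <| .of_forall fun x => ?_
  exact sq_sum_abs_sub_le_crossEntropy_sub (hp_nonneg x) (fun i => hε.trans_le (hq (T x) i))
    (hp_sum x) (hq_sum (T x))

end Entropy

section SkewProduct

open ProbabilityTheory

variable {X S ι : Type*} [MeasurableSpace X] [MeasurableSpace S] [Fintype ι]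

/-- The skew product over `T` whose fibre map above `x` is `b x`. -/
def skewProduct (T : X → X) (b : X → S → S) (p : X × S) : X × S :=
  (T p.1, b p.1 p.2)

/-- The distribution of the labels `c (x, ·)` under `κ x`, averaged with the uniform distribution
on `ι` so that its entries stay away from `0`. -/
noncomputable def smoothedCellMass (κ : Kernel X S) (c : X × S → ι) (x : X) (i : ι) : ℝ :=
  ((κ x).real (Prod.mk x ⁻¹' (c ⁻¹' {i})) + (Fintype.card ι : ℝ)⁻¹) / 2

/-- The `ℓ¹` distance between the smoothed distribution over `x` of the labels pulled back by the
skew product and the smoothed distribution over `T x` of the labels themselves. -/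
noncomputable def cellMassShift (κ : Kernel X S) (T : X → X) (b : X → S → S) (c : X × S → ι)
    (x : X) : ℝ :=
  ∑ i, |smoothedCellMass κ (c ∘ skewProduct T b) x i - smoothedCellMass κ c (T x) i|

/-- The mean over `ρ` of the entropy of the smoothed label distributions. -/
noncomputable def cellEntropy (ρ : Measure X) (κ : Kernel X S) (c : X × S → ι) : ℝ :=
  ∫ x, crossEntropy (smoothedCellMass κ c x) (smoothedCellMass κ c x) ∂ρ

/-- The failure, tested against `f`, of `b x` to push `κ x` forward to `κ (T x)`. -/
noncomputable def fiberDefect (κ : Kernel X S) (T : X → X) (b : X → S → S) (f : S → ℝ)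
    (x : X) : ℝ :=
  ∫ v, f (b x v) ∂κ x - ∫ v, f v ∂κ (T x)

lemma inv_two_mul_card_pos [Nonempty ι] : (0 : ℝ) < (2 * Fintype.card ι : ℝ)⁻¹ :=
  inv_pos.2 (mul_pos two_pos (Nat.cast_pos.2 Fintype.card_pos))

lemma inv_two_mul_card_le_smoothedCellMass (κ : Kernel X S) (c : X × S → ι) (x : X) (i : ι) :
    (2 * Fintype.card ι : ℝ)⁻¹ ≤ smoothedCellMass κ c x i := by
  rw [smoothedCellMass, mul_inv, div_eq_inv_mul]
  gcongr
  exact le_add_of_nonneg_left measureReal_nonneg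

lemma smoothedCellMass_nonneg (κ : Kernel X S) (c : X × S → ι) (x : X) (i : ι) :
    0 ≤ smoothedCellMass κ c x i :=
  div_nonneg (add_nonneg measureReal_nonneg (by positivity)) zero_le_two

variable [MeasurableSpace ι] [MeasurableSingletonClass ι] {κ : Kernel X S} [IsMarkovKernel κ]
  {T : X → X} {b : X → S → S} {c : X × S → ι} {ρ : Measure X}

lemma sum_smoothedCellMass [Nonempty ι] (hc : Measurable c) (x : X) :
    ∑ i, smoothedCellMass κ c x i = 1 := by
  have hmass : ∑ i, (κ x).real (Prod.mk x ⁻¹' (c ⁻¹' {i})) = 1 :=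
    (sum_measureReal_preimage_singleton (f := fun v => c (x, v)) Finset.univ
      fun i _ => hc.comp measurable_prodMk_left (measurableSet_singleton i)).trans (by simp)
  simp only [smoothedCellMass, ← Finset.sum_div, Finset.sum_add_distrib, hmass,
    Finset.sum_const, Finset.card_univ, nsmul_eq_mul]
  rw [mul_inv_cancel₀ (Nat.cast_ne_zero.2 Fintype.card_ne_zero), one_add_one_eq_two,
    div_self two_ne_zero]

lemma measurable_smoothedCellMass (hc : Measurable c) (i : ι) :
    Measurable fun x => smoothedCellMass κ c x i :=
  (((Kernel.measurable_kernel_prodMk_left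
    (hc (measurableSet_singleton i))).ennreal_toReal).add_const _).div_const 2

lemma integrable_smoothedCellMass_mul [Nonempty ι] (hc : Measurable c) (i : ι) {g : X → ℝ}
    (hg : Integrable g ρ) : Integrable (fun x => smoothedCellMass κ c x i * g x) ρ :=
  hg.bdd_mul (c := 1) (measurable_smoothedCellMass hc i).aestronglyMeasurable <|
    .of_forall fun x => (Real.norm_of_nonneg (smoothedCellMass_nonneg κ c x i)).trans_le <|
      le_one_of_sum_eq_one (smoothedCellMass_nonneg κ c x) (sum_smoothedCellMass hc x) i

lemma integral_smoothedCellMass_mul (hc : Measurable c) (i : ι) {g : X → ℝ}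
    (hg : Integrable g ρ) :
    ∫ x, smoothedCellMass κ c x i * g x ∂ρ =
      (∫ x, (κ x).real (Prod.mk x ⁻¹' (c ⁻¹' {i})) * g x ∂ρ +
        (Fintype.card ι : ℝ)⁻¹ * ∫ x, g x ∂ρ) / 2 := by
  have hmass : Measurable fun x => (κ x).real (Prod.mk x ⁻¹' (c ⁻¹' {i})) :=
    (Kernel.measurable_kernel_prodMk_left (hc (measurableSet_singleton i))).ennreal_toReal
  have hmass_mul : Integrable (fun x => (κ x).real (Prod.mk x ⁻¹' (c ⁻¹' {i})) * g x) ρ :=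
    hg.bdd_mul (c := 1) hmass.aestronglyMeasurable <| .of_forall fun x =>
      (Real.norm_of_nonneg measureReal_nonneg).trans_le measureReal_le_one
  rw [← integral_const_mul, ← integral_add hmass_mul (hg.const_mul _), ← integral_div]
  exact integral_congr_ae <| .of_forall fun x => by simp only [smoothedCellMass]; ring

lemma cellEntropy_nonneg [Nonempty ι] (hc : Measurable c) :
    0 ≤ cellEntropy ρ κ c :=
  integral_nonneg fun x => crossEntropy_nonneg (smoothedCellMass_nonneg κ c x)
    (smoothedCellMass_nonneg κ c x) (sum_smoothedCellMass hc x)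

variable [IsProbabilityMeasure ρ]

lemma cellEntropy_le_log [Nonempty ι] (hc : Measurable c) :
    cellEntropy ρ κ c ≤ Real.log (2 * Fintype.card ι) := by
  refine (Real.le_norm_self _).trans <| (norm_integral_le_of_norm_le_const <|
    .of_forall fun x => ?_).trans_eq (by rw [probReal_univ, mul_one])
  have hmass := smoothedCellMass_nonneg κ c x
  rw [Real.norm_of_nonneg (crossEntropy_nonneg hmass hmass (sum_smoothedCellMass hc x)),
    ← neg_neg (Real.log _), ← Real.log_inv]
  exact crossEntropy_le inv_two_mul_card_pos hmass (sum_smoothedCellMass hc x)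
    (inv_two_mul_card_le_smoothedCellMass κ c x)

lemma bind_map_prodMk_eq_compProd (ρ : Measure X) [SFinite ρ] (κ : Kernel X S)
    [IsSFiniteKernel κ] : (ρ.bind fun x => (κ x).map (Prod.mk x)) = ρ ⊗ₘ κ := by
  rw [Measure.compProd_eq_comp_prod]
  congr 1 with x : 1
  rw [Kernel.prod_apply, Kernel.id_apply, Measure.dirac_prod]

lemma measurePreserving_fst_compProd (ρ : Measure X) [SFinite ρ] (κ : Kernel X S)
    [IsMarkovKernel κ] : MeasurePreserving Prod.fst (ρ ⊗ₘ κ) ρ :=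
  ⟨measurable_fst, Measure.fst_compProd ρ κ⟩

lemma measurePreserving_base (hT : Measurable T)
    (hF : MeasurePreserving (skewProduct T b) (ρ ⊗ₘ κ) (ρ ⊗ₘ κ)) : MeasurePreserving T ρ ρ :=
  (measurePreserving_fst_compProd ρ κ).of_semiconj hF (fun _ => rfl) hT

lemma integral_measureReal_prodMk_mul {A : Set (X × S)} (hA : MeasurableSet A) {g : X → ℝ}
    (hg : Integrable g ρ) :
    ∫ x, (κ x).real (Prod.mk x ⁻¹' A) * g x ∂ρ = ∫ p in A, g p.1 ∂(ρ ⊗ₘ κ) := by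
  have hg_fst : Integrable (fun p : X × S => g p.1) (ρ ⊗ₘ κ) :=
    (measurePreserving_fst_compProd ρ κ).integrable_comp_of_integrable hg
  rw [← integral_indicator hA, Measure.integral_compProd (hg_fst.indicator hA)]
  refine integral_congr_ae <| .of_forall fun x => ?_
  exact (integral_indicator_const (μ := κ x) (g x) (measurable_prodMk_left hA)).symm

lemma integral_measureReal_prodMk_preimage_mul (hT : Measurable T)
    (hF : MeasurePreserving (skewProduct T b) (ρ ⊗ₘ κ) (ρ ⊗ₘ κ)) {A : Set (X × S)}
    (hA : MeasurableSet A) {g : X → ℝ} (hg : Integrable g ρ) :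
    ∫ x, (κ x).real (Prod.mk x ⁻¹' (skewProduct T b ⁻¹' A)) * g (T x) ∂ρ =
      ∫ x, (κ x).real (Prod.mk x ⁻¹' A) * g x ∂ρ := by
  have hg_fst : Integrable (fun p : X × S => g p.1) (ρ ⊗ₘ κ) :=
    (measurePreserving_fst_compProd ρ κ).integrable_comp_of_integrable hg
  have hmap := setIntegral_map hA (hF.map_eq.symm ▸ hg_fst.aestronglyMeasurable) hF.aemeasurable
  rw [hF.map_eq] at hmap
  rw [integral_measureReal_prodMk_mul hA hg, hmap]
  exact integral_measureReal_prodMk_mul (hF.measurable hA)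
    ((measurePreserving_base hT hF).integrable_comp_of_integrable hg)

lemma integral_smoothedCellMass_comp_mul (hT : Measurable T)
    (hF : MeasurePreserving (skewProduct T b) (ρ ⊗ₘ κ) (ρ ⊗ₘ κ)) (hc : Measurable c) (i : ι)
    {g : X → ℝ} (hg : Integrable g ρ) :
    ∫ x, smoothedCellMass κ (c ∘ skewProduct T b) x i * g (T x) ∂ρ =
      ∫ x, smoothedCellMass κ c x i * g x ∂ρ := by
  have hTρ := measurePreserving_base hT hF
  have hg_comp : ∫ x, g (T x) ∂ρ = ∫ x, g x ∂ρ := by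
    rw [← integral_map hT.aemeasurable (hTρ.map_eq.symm ▸ hg.aestronglyMeasurable), hTρ.map_eq]
  have hg_int : Integrable (fun x => g (T x)) ρ := hTρ.integrable_comp_of_integrable hg
  rw [integral_smoothedCellMass_mul (hc.comp hF.measurable) i hg_int,
    integral_smoothedCellMass_mul hc i hg,
    Set.preimage_comp, integral_measureReal_prodMk_preimage_mul hT hF
      (hc (measurableSet_singleton i)) hg, hg_comp]

lemma integrable_log_smoothedCellMass [Nonempty ι] (hc : Measurable c) (i : ι) :
    Integrable (fun x => -Real.log (smoothedCellMass κ c x i)) ρ := by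
  refine .of_bound (measurable_smoothedCellMass hc i).log.neg.aestronglyMeasurable
    (-Real.log (2 * Fintype.card ι : ℝ)⁻¹) <| .of_forall fun x => ?_
  have hmass_le := le_one_of_sum_eq_one (smoothedCellMass_nonneg κ c x)
    (sum_smoothedCellMass hc x) i
  rw [Real.norm_of_nonneg
    (neg_nonneg.2 (Real.log_nonpos (smoothedCellMass_nonneg κ c x i) hmass_le))]
  exact neg_le_neg (Real.log_le_log inv_two_mul_card_pos
    (inv_two_mul_card_le_smoothedCellMass κ c x i))

lemma integral_crossEntropy_smoothedCellMass_comp [Nonempty ι] (hT : Measurable T)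
    (hF : MeasurePreserving (skewProduct T b) (ρ ⊗ₘ κ) (ρ ⊗ₘ κ)) (hc : Measurable c) :
    ∫ x, crossEntropy (smoothedCellMass κ (c ∘ skewProduct T b) x)
      (smoothedCellMass κ c (T x)) ∂ρ = cellEntropy ρ κ c := by
  have hlog (i : ι) := integrable_log_smoothedCellMass (ρ := ρ) (κ := κ) hc i
  have hlog_comp (i : ι) : Integrable (fun x => -Real.log (smoothedCellMass κ c (T x) i)) ρ :=
    (measurePreserving_base hT hF).integrable_comp_of_integrable (hlog i)
  simp only [cellEntropy, crossEntropy]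
  rw [integral_finsetSum _ fun i _ => integrable_smoothedCellMass_mul hc i (hlog i),
    integral_finsetSum _ fun i _ =>
      integrable_smoothedCellMass_mul (hc.comp hF.measurable) i (hlog_comp i)]
  exact Finset.sum_congr rfl fun i _ => integral_smoothedCellMass_comp_mul hT hF hc i (hlog i)

theorem integral_sq_cellMassShift_le [Nonempty ι] (hT : Measurable T)
    (hF : MeasurePreserving (skewProduct T b) (ρ ⊗ₘ κ) (ρ ⊗ₘ κ)) (hc : Measurable c) :
    ∫ x, cellMassShift κ T b c x ^ 2 ∂ρ ≤
      4 * (cellEntropy ρ κ c - cellEntropy ρ κ (c ∘ skewProduct T b)) := by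
  have hcF := hc.comp hF.measurable
  exact integral_sq_sum_abs_sub_le_entropy_drop hT inv_two_mul_card_pos
    (measurable_smoothedCellMass hcF) (measurable_smoothedCellMass hc)
    (inv_two_mul_card_le_smoothedCellMass κ _) (inv_two_mul_card_le_smoothedCellMass κ c)
    (sum_smoothedCellMass hcF) (sum_smoothedCellMass hc)
    (integral_crossEntropy_smoothedCellMass_comp hT hF hc)

lemma abs_integral_sub_sum_le {μ : Measure S} [IsProbabilityMeasure μ] {c : S → ι}
    (hc : Measurable c) {f : S → ℝ} (hf : Integrable f μ) {φ : ι → ℝ} {ω : ℝ}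
    (hφ : ∀ v, |f v - φ (c v)| ≤ ω) :
    |∫ v, f v ∂μ - ∑ i, φ i * μ.real (c ⁻¹' {i})| ≤ ω := by
  have hφ_int : Integrable (fun v => φ (c v)) μ :=
    .of_bound ((measurable_of_finite φ).comp hc).aestronglyMeasurable (∑ i, |φ i|) <|
      .of_forall fun v => Finset.single_le_sum (f := fun i => |φ i|) (fun _ _ => abs_nonneg _)
        (Finset.mem_univ (c v))
  have hsum : ∫ v, φ (c v) ∂μ = ∑ i, φ i * μ.real (c ⁻¹' {i}) := by
    have := Measure.isProbabilityMeasure_map (μ := μ) hc.aemeasurable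
    rw [← integral_map hc.aemeasurable (measurable_of_finite φ).aestronglyMeasurable,
      integral_fintype .of_finite]
    refine Finset.sum_congr rfl fun i _ => ?_
    rw [map_measureReal_apply hc (measurableSet_singleton i), smul_eq_mul, mul_comm]
  rw [← hsum, ← integral_sub hf hφ_int]
  simpa using norm_integral_le_of_norm_le_const (μ := μ) (f := fun v => f v - φ (c v))
    (.of_forall hφ)

lemma abs_integral_sub_integral_le {μ ν : Measure S} [IsProbabilityMeasure μ]
    [IsProbabilityMeasure ν] {c : S → ι} (hc : Measurable c) {f : S → ℝ} (hfμ : Integrable f μ)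
    (hfν : Integrable f ν) {φ : ι → ℝ} {M ω : ℝ} (hφ_bound : ∀ i, |φ i| ≤ M)
    (hφ : ∀ v, |f v - φ (c v)| ≤ ω) :
    |∫ v, f v ∂μ - ∫ v, f v ∂ν| ≤
      M * ∑ i, |μ.real (c ⁻¹' {i}) - ν.real (c ⁻¹' {i})| + 2 * ω := by
  have hμ := abs_le.1 (abs_integral_sub_sum_le hc hfμ hφ)
  have hν := abs_le.1 (abs_integral_sub_sum_le hc hfν hφ)
  have hdiff : |∑ i, φ i * μ.real (c ⁻¹' {i}) - ∑ i, φ i * ν.real (c ⁻¹' {i})| ≤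
      M * ∑ i, |μ.real (c ⁻¹' {i}) - ν.real (c ⁻¹' {i})| := by
    rw [← Finset.sum_sub_distrib, Finset.mul_sum]
    refine (Finset.abs_sum_le_sum_abs _ _).trans <| Finset.sum_le_sum fun i _ => ?_
    rw [← mul_sub, abs_mul]
    exact mul_le_mul_of_nonneg_right (hφ_bound i) (abs_nonneg _)
  have hdiff := abs_le.1 hdiff
  exact abs_le.2 ⟨by linarith, by linarith⟩

lemma abs_fiberDefect_le {f : S → ℝ} {M : ℝ} (hM : ∀ v, |f v| ≤ M) (x : X) :
    |fiberDefect κ T b f x| ≤ 2 * M := by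
  have hbound (y : X) {g : S → ℝ} (hg : ∀ v, |g v| ≤ M) : |∫ v, g v ∂κ y| ≤ M := by
    simpa using norm_integral_le_of_norm_le_const (μ := κ y) (f := g) (.of_forall hg)
  have hsub := abs_sub (∫ v, f (b x v) ∂κ x) (∫ v, f v ∂κ (T x))
  exact hsub.trans (by linarith [hbound x fun v => hM (b x v), hbound (T x) hM])

lemma measurable_fiberDefect (hT : Measurable T) (hF : Measurable (skewProduct T b))
    {f : S → ℝ} (hf : Measurable f) : Measurable (fiberDefect κ T b f) := by
  have hpush : StronglyMeasurable fun x => ∫ v, f (b x v) ∂κ x :=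
    (hf.comp hF.snd).stronglyMeasurable.integral_kernel_prod_right'
  have hbase : StronglyMeasurable fun x => ∫ v, f v ∂κ x :=
    (hf.comp measurable_snd).stronglyMeasurable.integral_kernel_prod_right'
  exact hpush.measurable.sub (hbase.measurable.comp hT)

lemma abs_fiberDefect_le_cellMassShift (hF : Measurable (skewProduct T b)) (hc : Measurable c)
    {f : S → ℝ} (hf : Measurable f) {M ω : ℝ} (hM : ∀ v, |f v| ≤ M) {x : X}
    (hosc : ∀ v w, c (T x, v) = c (T x, w) → |f v - f w| ≤ ω) :
    |fiberDefect κ T b f x| ≤ 2 * M * cellMassShift κ T b c x + 2 * ω := by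
  have hbx : Measurable (b x) := hF.snd.comp measurable_prodMk_left
  have hcx : Measurable fun v => c (T x, v) := hc.comp measurable_prodMk_left
  have : Nonempty S := (κ x).nonempty_of_neZero
  have := Measure.isProbabilityMeasure_map (μ := κ x) hbx.aemeasurable
  have hf_int (μ : Measure S) [IsProbabilityMeasure μ] : Integrable f μ :=
    .of_bound hf.aestronglyMeasurable M (.of_forall hM)
  have hmass (i : ι) : |((κ x).map (b x)).real ((fun v => c (T x, v)) ⁻¹' {i}) -
      (κ (T x)).real ((fun v => c (T x, v)) ⁻¹' {i})| =
      2 * |smoothedCellMass κ (c ∘ skewProduct T b) x i - smoothedCellMass κ c (T x) i| := by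
    rw [map_measureReal_apply hbx (hcx (measurableSet_singleton i)), ← abs_two, ← abs_mul]
    refine congrArg _ (Eq.symm ?_)
    rw [smoothedCellMass, smoothedCellMass, ← sub_div, add_sub_add_right_eq_sub,
      mul_div_cancel₀ _ two_ne_zero]
    rfl
  have hpair := abs_integral_sub_integral_le (μ := (κ x).map (b x)) (ν := κ (T x)) hcx
    (φ := f ∘ Function.invFun fun v => c (T x, v)) (hf_int _) (hf_int _) (fun i => hM _)
    fun v => hosc _ _ (Function.invFun_eq (f := fun w => c (T x, w)) ⟨v, rfl⟩).symm
  rw [integral_map hbx.aemeasurable hf.aestronglyMeasurable] at hpair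
  simpa only [fiberDefect, cellMassShift, hmass, ← Finset.mul_sum, ← mul_assoc, mul_comm M 2]
    using hpair

lemma sq_fiberDefect_le (hF : Measurable (skewProduct T b)) (hc : Measurable c)
    {f : S → ℝ} (hf : Measurable f) {M ω : ℝ} (hM : ∀ v, |f v| ≤ M) {E : Set X}
    (hosc : ∀ x ∉ E, ∀ v w, c (x, v) = c (x, w) → |f v - f w| ≤ ω) (x : X) :
    fiberDefect κ T b f x ^ 2 ≤ E.indicator (fun _ => 4 * M ^ 2) (T x) +
      8 * M ^ 2 * cellMassShift κ T b c x ^ 2 + 8 * ω ^ 2 := by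
  by_cases hx : T x ∈ E
  · rw [Set.indicator_of_mem hx]
    have hle : fiberDefect κ T b f x ^ 2 ≤ (2 * M) ^ 2 :=
      sq_le_sq.2 ((abs_fiberDefect_le hM x).trans (le_abs_self _))
    linarith [mul_nonneg (sq_nonneg M) (sq_nonneg (cellMassShift κ T b c x)), sq_nonneg ω]
  · rw [Set.indicator_of_notMem hx, zero_add]
    have hle := abs_fiberDefect_le_cellMassShift (κ := κ) hF hc hf hM (hosc (T x) hx)
    calc fiberDefect κ T b f x ^ 2
        ≤ (2 * M * cellMassShift κ T b c x + 2 * ω) ^ 2 :=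
          sq_le_sq.2 (hle.trans (le_abs_self _))
      _ ≤ 2 * ((2 * M * cellMassShift κ T b c x) ^ 2 + (2 * ω) ^ 2) := add_sq_le
      _ = 8 * M ^ 2 * cellMassShift κ T b c x ^ 2 + 8 * ω ^ 2 := by ring

lemma cellMassShift_le_two [Nonempty ι] (hF : Measurable (skewProduct T b)) (hc : Measurable c)
    (x : X) : cellMassShift κ T b c x ≤ 2 :=
  calc cellMassShift κ T b c x
      ≤ ∑ i, (smoothedCellMass κ (c ∘ skewProduct T b) x i + smoothedCellMass κ c (T x) i) :=
        Finset.sum_le_sum fun i _ => by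
          have hpull := smoothedCellMass_nonneg κ (c ∘ skewProduct T b) x i
          have hbase := smoothedCellMass_nonneg κ c (T x) i
          exact abs_le.2 ⟨by linarith, by linarith⟩
    _ = 2 := by
        rw [Finset.sum_add_distrib, sum_smoothedCellMass (hc.comp hF), sum_smoothedCellMass hc,
          one_add_one_eq_two]

lemma integrable_sq_cellMassShift [Nonempty ι] (hT : Measurable T)
    (hF : Measurable (skewProduct T b)) (hc : Measurable c) :
    Integrable (fun x => cellMassShift κ T b c x ^ 2) ρ := by
  have hmeas : Measurable (cellMassShift κ T b c) := Finset.measurable_fun_sum _ fun i _ =>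
    ((measurable_smoothedCellMass (hc.comp hF) i).sub
      ((measurable_smoothedCellMass hc i).comp hT)).norm
  refine .of_bound (hmeas.pow_const 2).aestronglyMeasurable (2 ^ 2) <| .of_forall fun x => ?_
  rw [Real.norm_of_nonneg (sq_nonneg _)]
  exact pow_le_pow_left₀ (Finset.sum_nonneg fun _ _ => abs_nonneg _)
    (cellMassShift_le_two hF hc x) 2

theorem integral_sq_fiberDefect_le [Nonempty ι] (hT : Measurable T)
    (hF : MeasurePreserving (skewProduct T b) (ρ ⊗ₘ κ) (ρ ⊗ₘ κ)) (hc : Measurable c)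
    {f : S → ℝ} (hf : Measurable f) {M ω : ℝ} (hM : ∀ v, |f v| ≤ M) {E : Set X}
    (hE : MeasurableSet E)
    (hosc : ∀ x ∉ E, ∀ v w, c (x, v) = c (x, w) → |f v - f w| ≤ ω) :
    ∫ x, fiberDefect κ T b f x ^ 2 ∂ρ ≤ 4 * M ^ 2 * ρ.real E +
      32 * M ^ 2 * (cellEntropy ρ κ c - cellEntropy ρ κ (c ∘ skewProduct T b)) + 8 * ω ^ 2 := by
  have hTρ := measurePreserving_base hT hF
  have hind_int : Integrable (E.indicator fun _ => 4 * M ^ 2) ρ :=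
    (integrable_const _).indicator hE
  have hind : ∫ x, E.indicator (fun _ => 4 * M ^ 2) (T x) ∂ρ = 4 * M ^ 2 * ρ.real E := by
    rw [← integral_map hT.aemeasurable (hTρ.map_eq.symm ▸ hind_int.aestronglyMeasurable),
      hTρ.map_eq, integral_indicator_const _ hE, smul_eq_mul, mul_comm]
  have hind_comp : Integrable (fun x => E.indicator (fun _ => 4 * M ^ 2) (T x)) ρ :=
    hTρ.integrable_comp_of_integrable hind_int
  have hshift := (integrable_sq_cellMassShift (ρ := ρ) (κ := κ) hT hF.measurable hc).const_mul
    (8 * M ^ 2)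
  calc ∫ x, fiberDefect κ T b f x ^ 2 ∂ρ
      ≤ ∫ x, (E.indicator (fun _ => 4 * M ^ 2) (T x) +
          8 * M ^ 2 * cellMassShift κ T b c x ^ 2 + 8 * ω ^ 2) ∂ρ :=
        integral_mono_of_nonneg (.of_forall fun x => sq_nonneg _)
          ((hind_comp.fun_add hshift).add (integrable_const _))
          (.of_forall (sq_fiberDefect_le hF.measurable hc hf hM hosc))
    _ = 4 * M ^ 2 * ρ.real E + 8 * M ^ 2 * ∫ x, cellMassShift κ T b c x ^ 2 ∂ρ + 8 * ω ^ 2 := by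
        rw [integral_add (hind_comp.fun_add hshift) (integrable_const _),
          integral_add hind_comp hshift, hind, integral_const_mul, integral_const,
          probReal_univ, one_smul]
    _ ≤ _ := by
        have := mul_le_mul_of_nonneg_left (integral_sq_cellMassShift_le hT hF hc)
          (by positivity : 0 ≤ 8 * M ^ 2)
        linarith

theorem mul_integral_sq_fiberDefect_le [Nonempty ι] (hT : Measurable T)
    (hF : MeasurePreserving (skewProduct T b) (ρ ⊗ₘ κ) (ρ ⊗ₘ κ)) (hc : Measurable c)
    {f : S → ℝ} (hf : Measurable f) {M ω : ℝ} (hM : ∀ v, |f v| ≤ M) {E : ℕ → Set X}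
    (hE : ∀ j, MeasurableSet (E j)) {n : ℕ}
    (hosc : ∀ j < n, ∀ x ∉ E j, ∀ v w, c ((skewProduct T b)^[j] (x, v)) =
      c ((skewProduct T b)^[j] (x, w)) → |f v - f w| ≤ ω) :
    n * ∫ x, fiberDefect κ T b f x ^ 2 ∂ρ ≤ 4 * M ^ 2 * ∑ j ∈ Finset.range n, ρ.real (E j) +
      32 * M ^ 2 * Real.log (2 * Fintype.card ι) + n * (8 * ω ^ 2) := by
  set F := skewProduct T b
  have hcF (j : ℕ) : Measurable (c ∘ F^[j]) := hc.comp (hF.measurable.iterate j)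
  calc n * ∫ x, fiberDefect κ T b f x ^ 2 ∂ρ
      = ∑ j ∈ Finset.range n, ∫ x, fiberDefect κ T b f x ^ 2 ∂ρ := by simp
    _ ≤ ∑ j ∈ Finset.range n, (4 * M ^ 2 * ρ.real (E j) + 32 * M ^ 2 *
          (cellEntropy ρ κ (c ∘ F^[j]) - cellEntropy ρ κ (c ∘ F^[j + 1])) + 8 * ω ^ 2) :=
        Finset.sum_le_sum fun j hj => integral_sq_fiberDefect_le hT hF (hcF j) hf hM (hE j)
          (hosc j (Finset.mem_range.1 hj))
    _ = 4 * M ^ 2 * ∑ j ∈ Finset.range n, ρ.real (E j) + 32 * M ^ 2 *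
          (cellEntropy ρ κ (c ∘ F^[0]) - cellEntropy ρ κ (c ∘ F^[n])) + n * (8 * ω ^ 2) := by
        rw [Finset.sum_add_distrib, Finset.sum_add_distrib, ← Finset.mul_sum, ← Finset.mul_sum,
          Finset.sum_range_sub' fun j => cellEntropy ρ κ (c ∘ F^[j])]
        simp
    _ ≤ _ := by
        gcongr
        linarith [cellEntropy_le_log (ρ := ρ) (κ := κ) (hcF 0),
          cellEntropy_nonneg (ρ := ρ) (κ := κ) (hcF n)]

end SkewProduct

section TestFunctions

lemma continuous_integral_continuousMap {S : Type*} [TopologicalSpace S] [CompactSpace S]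
    [MeasurableSpace S] [BorelSpace S] (μ : Measure S)
    [IsFiniteMeasure μ] :
    Continuous fun f : C(S, ℝ) => ∫ v, f v ∂μ :=
  (continuous_integral.comp (ContinuousMap.toLp 1 μ ℝ).continuous).congr fun f =>
    integral_congr_ae (ContinuousMap.coeFn_toLp μ f)

lemma ae_eq_of_forall_ae_integral_eq {X S : Type*} [MeasurableSpace X] {ρ : Measure X}
    [PseudoMetricSpace S] [CompactSpace S] [MeasurableSpace S] [BorelSpace S]
    {μ ν : X → Measure S} [∀ x, IsFiniteMeasure (μ x)] [∀ x, IsFiniteMeasure (ν x)]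
    (h : ∀ f : C(S, ℝ), ∀ᵐ x ∂ρ, ∫ v, f v ∂μ x = ∫ v, f v ∂ν x) :
    ∀ᵐ x ∂ρ, μ x = ν x := by
  filter_upwards [ae_all_iff.2 fun k => h (TopologicalSpace.denseSeq C(S, ℝ) k)] with x hx
  have heq : (fun f : C(S, ℝ) => ∫ v, f v ∂μ x) = fun f => ∫ v, f v ∂ν x :=
    (continuous_integral_continuousMap (μ x)).ext_on (TopologicalSpace.denseRange_denseSeq _)
      (continuous_integral_continuousMap (ν x)) (Set.forall_mem_range.2 hx)
  exact ext_of_forall_integral_eq_of_IsFiniteMeasure fun f => congrFun heq f.toContinuousMap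

end TestFunctions

section SubexponentialContraction

open ProbabilityTheory Topology

/-- Finiteness of the upper box dimension of `S`, witnessed by measurable partitions: for `δ ≤ 1`
the space splits into polynomially many (in `δ⁻¹`) measurable cells of diameter at most `δ`. -/
def HasFiniteBoxDimension (S : Type*) [PseudoMetricSpace S] [MeasurableSpace S] : Prop :=
  ∃ (A : ℝ) (D : ℕ), ∀ δ, 0 < δ → δ ≤ 1 → ∃ (N : ℕ) (c : S → Fin N), Measurable c ∧
    N ≤ A * δ⁻¹ ^ D ∧ ∀ v w, c v = c w → dist v w ≤ δ

lemma HasFiniteBoxDimension.exists_partition_log_le {S : Type*} [PseudoMetricSpace S]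
    [MeasurableSpace S] [Nonempty S] (hS : HasFiniteBoxDimension S) :
    ∃ K D : ℝ, ∀ t, 0 ≤ t → ∃ (N : ℕ) (c : S → Fin N), Measurable c ∧
      Real.log (2 * N) ≤ K + D * t ∧ ∀ v w, c v = c w → dist v w ≤ Real.exp (-t) := by
  obtain ⟨A, D, hAD⟩ := hS
  refine ⟨Real.log (2 * A), D, fun t ht => ?_⟩
  obtain ⟨N, c, hc, hN, hdiam⟩ := hAD (Real.exp (-t)) (Real.exp_pos _)
    (Real.exp_le_one_iff.2 (neg_nonpos.2 ht))
  refine ⟨N, c, hc, ?_, hdiam⟩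
  have hN_pos : (0 : ℝ) < N := Nat.cast_pos.2 (Fin.pos (c (Classical.arbitrary S)))
  rw [← Real.exp_neg, neg_neg, ← Real.exp_nat_mul] at hN
  have hA : 0 < A := pos_of_mul_pos_left (hN_pos.trans_le hN) (Real.exp_pos _).le
  calc Real.log (2 * N)
      ≤ Real.log (2 * A * Real.exp (D * t)) := Real.log_le_log (by positivity) (by linarith)
    _ = Real.log (2 * A) + D * t := by
        rw [Real.log_mul (by positivity) (Real.exp_ne_zero _), Real.log_exp]

/-- Over `x`, the `n`-th iterate of the skew product contracts distances in the fibre at most by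
the factor `exp (-ℓ n x)`. -/
def HasFiberContractionBound {X S : Type*} [PseudoMetricSpace S] (T : X → X) (b : X → S → S)
    (ℓ : ℕ → X → ℝ) : Prop :=
  ∀ n x v w, dist v w ≤ Real.exp (ℓ n x) *
    dist ((skewProduct T b)^[n] (x, v)).2 ((skewProduct T b)^[n] (x, w)).2

variable {X S : Type*} [MeasurableSpace X] {ρ : Measure X}

lemma tendsto_measureReal_lt_of_tendsto_lintegral_div {ℓ : ℕ → X → ℝ}
    (hℓ : ∀ n, Measurable (ℓ n))
    (hlim : Tendsto (fun n : ℕ => (∫⁻ x, ENNReal.ofReal (ℓ n x) ∂ρ) / n) atTop (𝓝 0))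
    {η : ℝ} (hη : 0 < η) :
    Tendsto (fun n : ℕ => ρ.real {x | η * n < ℓ n x}) atTop (𝓝 0) := by
  have hη_ne : ENNReal.ofReal η ≠ 0 := (ENNReal.ofReal_pos.2 hη).ne'
  have hdiv := ENNReal.Tendsto.div_const hlim (.inr hη_ne)
  rw [ENNReal.zero_div] at hdiv
  suffices Tendsto (fun n : ℕ => ρ {x | η * n < ℓ n x}) atTop (𝓝 0) from
    (ENNReal.tendsto_toReal ENNReal.zero_ne_top).comp this
  refine tendsto_of_tendsto_of_tendsto_of_le_of_le' tendsto_const_nhds hdiv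
    (.of_forall fun _ => zero_le) ?_
  filter_upwards [eventually_gt_atTop 0] with n hn
  have hηn : 0 < η * n := mul_pos hη (Nat.cast_pos.2 hn)
  calc ρ {x | η * n < ℓ n x}
      ≤ ρ {x | ENNReal.ofReal (η * n) ≤ ENNReal.ofReal (ℓ n x)} :=
        measure_mono fun x hx => ENNReal.ofReal_le_ofReal hx.le
    _ ≤ (∫⁻ x, ENNReal.ofReal (ℓ n x) ∂ρ) / ENNReal.ofReal (η * n) :=
        meas_ge_le_lintegral_div (hℓ n).ennreal_ofReal.aemeasurable
          (ENNReal.ofReal_pos.2 hηn).ne' ENNReal.ofReal_ne_top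
    _ = (∫⁻ x, ENNReal.ofReal (ℓ n x) ∂ρ) / n / ENNReal.ofReal η := by
        rw [ENNReal.ofReal_mul hη.le, ENNReal.ofReal_natCast, mul_comm, div_eq_mul_inv,
          ENNReal.mul_inv (.inr ENNReal.ofReal_ne_top) (.inr hη_ne), ← mul_assoc,
          ← div_eq_mul_inv, ← div_eq_mul_inv]

variable [IsProbabilityMeasure ρ] [PseudoMetricSpace S] [MeasurableSpace S] {κ : Kernel X S}
  [IsMarkovKernel κ] {T : X → X} {b : X → S → S} {ℓ : ℕ → X → ℝ}

lemma mul_integral_sq_fiberDefect_le_of_diam_le (hT : Measurable T)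
    (hF : MeasurePreserving (skewProduct T b) (ρ ⊗ₘ κ) (ρ ⊗ₘ κ)) (hℓ : ∀ n, Measurable (ℓ n))
    (hcontr : HasFiberContractionBound T b ℓ) {f : S → ℝ} (hf : Measurable f) {M : ℝ}
    (hM : ∀ v, |f v| ≤ M) {η ω : ℝ} (hη : 0 < η) {n : ℕ}
    (hosc : ∀ v w, dist v w ≤ Real.exp (-(η * n)) → |f v - f w| ≤ ω)
    {N : ℕ} {c : S → Fin N} (hc : Measurable c)
    (hdiam : ∀ v w, c v = c w → dist v w ≤ Real.exp (-(2 * η * n))) :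
    n * ∫ x, fiberDefect κ T b f x ^ 2 ∂ρ ≤
      4 * M ^ 2 * ∑ j ∈ Finset.range n, ρ.real {x | η * j < ℓ j x} +
        32 * M ^ 2 * Real.log (2 * N) + n * (8 * ω ^ 2) := by
  have : Nonempty X := ρ.nonempty_of_neZero
  have : Nonempty S := (κ (Classical.arbitrary X)).nonempty_of_neZero
  have : Nonempty (Fin N) := ⟨c (Classical.arbitrary S)⟩
  have hcell : ∀ j < n, ∀ x ∉ {x | η * j < ℓ j x}, ∀ v w, c ((skewProduct T b)^[j] (x, v)).2 =
      c ((skewProduct T b)^[j] (x, w)).2 → |f v - f w| ≤ ω := fun j hj x hx v w hvw =>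
    hosc v w <| calc
      dist v w ≤ Real.exp (ℓ j x) * Real.exp (-(2 * η * n)) := (hcontr j x v w).trans
          (mul_le_mul_of_nonneg_left (hdiam _ _ hvw) (Real.exp_pos _).le)
      _ ≤ Real.exp (-(η * n)) := by
          have hjn : η * j ≤ η * n := by gcongr
          have hx : ℓ j x ≤ η * j := not_lt.1 hx
          rw [← Real.exp_add, Real.exp_le_exp]
          linarith
  simpa only [Fintype.card_fin] using mul_integral_sq_fiberDefect_le (c := fun p => c p.2) hT hF
    (hc.comp measurable_snd) hf hM (fun j => measurableSet_lt measurable_const (hℓ j)) hcell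

variable [CompactSpace S] [BorelSpace S]

lemma integral_sq_fiberDefect_le_of_tendsto (hT : Measurable T)
    (hF : MeasurePreserving (skewProduct T b) (ρ ⊗ₘ κ) (ρ ⊗ₘ κ)) (hℓ : ∀ n, Measurable (ℓ n))
    (hcontr : HasFiberContractionBound T b ℓ)
    (hlim : Tendsto (fun n : ℕ => (∫⁻ x, ENNReal.ofReal (ℓ n x) ∂ρ) / n) atTop (𝓝 0))
    {K D : ℝ} (hpartition : ∀ t, 0 ≤ t → ∃ (N : ℕ) (c : S → Fin N), Measurable c ∧
      Real.log (2 * N) ≤ K + D * t ∧ ∀ v w, c v = c w → dist v w ≤ Real.exp (-t))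
    (f : C(S, ℝ)) {η : ℝ} (hη : 0 < η) :
    ∫ x, fiberDefect κ T b f x ^ 2 ∂ρ ≤ 64 * ‖f‖ ^ 2 * D * η + 8 * η ^ 2 := by
  obtain ⟨r, hr, hosc⟩ := Metric.uniformContinuous_iff.1
    (CompactSpace.uniformContinuous_of_continuous f.continuous) η hη
  have hbad := (tendsto_measureReal_lt_of_tendsto_lintegral_div hℓ hlim hη).cesaro
  have hscale : Tendsto (fun n : ℕ => Real.exp (-(η * n))) atTop (𝓝 0) :=
    Real.tendsto_exp_neg_atTop_nhds_zero.comp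
      (tendsto_natCast_atTop_atTop.const_mul_atTop hη)
  have hrhs : Tendsto (fun n : ℕ => 4 * ‖f‖ ^ 2 *
      ((n : ℝ)⁻¹ * ∑ j ∈ Finset.range n, ρ.real {x | η * j < ℓ j x}) +
      32 * ‖f‖ ^ 2 * (K / n + D * (2 * η)) + 8 * η ^ 2) atTop
      (𝓝 (4 * ‖f‖ ^ 2 * 0 + 32 * ‖f‖ ^ 2 * (0 + D * (2 * η)) + 8 * η ^ 2)) :=
    ((hbad.const_mul _).add (((tendsto_const_div_atTop_nhds_zero_nat K).add_const _).const_mul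
      _)).add_const _
  refine (ge_of_tendsto hrhs ?_).trans_eq (by ring)
  filter_upwards [eventually_gt_atTop 0, hscale.eventually_lt_const hr] with n hn hnr
  obtain ⟨N, c, hc, hN, hdiam⟩ := hpartition (2 * η * n) (by positivity)
  have hn : (0 : ℝ) < n := Nat.cast_pos.2 hn
  have hbound := mul_integral_sq_fiberDefect_le_of_diam_le hT hF hℓ hcontr
    f.continuous.measurable f.norm_coe_le_norm hη
    (fun v w hvw => (hosc (hvw.trans_lt hnr)).le) hc hdiam
  refine le_of_mul_le_mul_left (hbound.trans ?_) hn
  calc 4 * ‖f‖ ^ 2 * ∑ j ∈ Finset.range n, ρ.real {x | η * j < ℓ j x} +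
        32 * ‖f‖ ^ 2 * Real.log (2 * N) + n * (8 * η ^ 2)
      ≤ 4 * ‖f‖ ^ 2 * ∑ j ∈ Finset.range n, ρ.real {x | η * j < ℓ j x} +
        32 * ‖f‖ ^ 2 * (K + D * (2 * η * n)) + n * (8 * η ^ 2) := by gcongr
    _ = _ := by field_simp

lemma ae_fiberDefect_eq_zero (hT : Measurable T)
    (hF : MeasurePreserving (skewProduct T b) (ρ ⊗ₘ κ) (ρ ⊗ₘ κ)) (hℓ : ∀ n, Measurable (ℓ n))
    (hcontr : HasFiberContractionBound T b ℓ)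
    (hlim : Tendsto (fun n : ℕ => (∫⁻ x, ENNReal.ofReal (ℓ n x) ∂ρ) / n) atTop (𝓝 0))
    (hS : HasFiniteBoxDimension S) (f : C(S, ℝ)) :
    ∀ᵐ x ∂ρ, fiberDefect κ T b f x = 0 := by
  have : Nonempty X := ρ.nonempty_of_neZero
  have : Nonempty S := (κ (Classical.arbitrary X)).nonempty_of_neZero
  obtain ⟨K, D, hpartition⟩ := hS.exists_partition_log_le
  have hrhs : Tendsto (fun η : ℝ => 64 * ‖f‖ ^ 2 * D * η + 8 * η ^ 2) (𝓝[>] 0) (𝓝 0) :=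
    tendsto_nhdsWithin_of_tendsto_nhds (Continuous.tendsto' (by fun_prop) _ _ (by simp))
  have hle : ∫ x, fiberDefect κ T b f x ^ 2 ∂ρ ≤ 0 :=
    ge_of_tendsto hrhs <| eventually_mem_nhdsWithin.mono fun η hη =>
      integral_sq_fiberDefect_le_of_tendsto hT hF hℓ hcontr hlim hpartition f hη
  have hint : Integrable (fun x => fiberDefect κ T b f x ^ 2) ρ :=
    .of_bound ((measurable_fiberDefect hT hF.measurable
      f.continuous.measurable).pow_const 2).aestronglyMeasurable ((2 * ‖f‖) ^ 2) <|
      .of_forall fun x => by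
        rw [Real.norm_eq_abs, abs_pow]
        exact pow_le_pow_left₀ (abs_nonneg _) (abs_fiberDefect_le f.norm_coe_le_norm x) 2
  have hzero := (integral_eq_zero_iff_of_nonneg (fun x => sq_nonneg _) hint).1
    (hle.antisymm (integral_nonneg fun x => sq_nonneg _))
  filter_upwards [hzero] with x hx using pow_eq_zero_iff two_ne_zero |>.1 hx

theorem ae_map_eq_of_tendsto_lintegral_div (hT : Measurable T)
    (hF : MeasurePreserving (skewProduct T b) (ρ ⊗ₘ κ) (ρ ⊗ₘ κ)) (hℓ : ∀ n, Measurable (ℓ n))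
    (hcontr : HasFiberContractionBound T b ℓ)
    (hlim : Tendsto (fun n : ℕ => (∫⁻ x, ENNReal.ofReal (ℓ n x) ∂ρ) / n) atTop (𝓝 0))
    (hS : HasFiniteBoxDimension S) :
    ∀ᵐ x ∂ρ, (κ x).map (b x) = κ (T x) := by
  have hb : ∀ x, Measurable (b x) := fun x =>
    measurable_snd.comp (hF.measurable.comp measurable_prodMk_left)
  have : ∀ x, IsProbabilityMeasure ((κ x).map (b x)) := fun x =>
    Measure.isProbabilityMeasure_map (hb x).aemeasurable
  refine ae_eq_of_forall_ae_integral_eq fun f => ?_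
  filter_upwards [ae_fiberDefect_eq_zero hT hF hℓ hcontr hlim hS f] with x hx
  rw [integral_map (hb x).aemeasurable f.continuous.aestronglyMeasurable]
  exact sub_eq_zero.1 hx

end SubexponentialContraction

section EuclideanBoxDimension

variable {ι : Type*} [Fintype ι]

lemma norm_le_card_mul_of_forall_abs_le {z : EuclideanSpace ℝ ι} {h : ℝ} (hz : ∀ i, |z i| ≤ h) :
    ‖z‖ ≤ Fintype.card ι * h :=
  calc ‖z‖ ≤ ∑ i, |z i| := by
        rw [EuclideanSpace.norm_eq]
        exact Real.sqrt_le_iff.2 ⟨Finset.sum_nonneg fun i _ => abs_nonneg _,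
          Finset.sum_sq_le_sq_sum_of_nonneg fun i _ => abs_nonneg _⟩
    _ ≤ ∑ _i : ι, h := Finset.sum_le_sum fun i _ => hz i
    _ = Fintype.card ι * h := by simp

lemma dist_le_of_floor_div_eq {h : ℝ} (hh : 0 < h) {v w : EuclideanSpace ℝ ι}
    (hvw : ∀ i, ⌊v i / h⌋ = ⌊w i / h⌋) : dist v w ≤ Fintype.card ι * h := by
  rw [dist_eq_norm]
  refine norm_le_card_mul_of_forall_abs_le fun i => ?_
  have hlt := Int.abs_sub_lt_one_of_floor_eq_floor (hvw i)
  rw [← sub_div, abs_div, abs_of_pos hh, div_lt_one hh] at hlt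
  exact hlt.le

lemma floor_div_mem_Icc {a R h : ℝ} (hh : 0 < h) (ha : |a| ≤ R) :
    ⌊a / h⌋ ∈ Finset.Icc (-(⌈R / h⌉₊ : ℤ)) ⌈R / h⌉₊ := by
  have hceil : |a / h| ≤ ⌈R / h⌉₊ := by
    rw [abs_div, abs_of_pos hh]
    exact (div_le_div_of_nonneg_right ha hh.le).trans (Nat.le_ceil _)
  obtain ⟨hlow, hhigh⟩ := abs_le.1 hceil
  refine Finset.mem_Icc.2 ⟨Int.le_floor.2 (by exact_mod_cast hlow), ?_⟩
  exact_mod_cast (Int.floor_le (a / h)).trans hhigh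

lemma exists_grid_partition {s : Set (EuclideanSpace ℝ ι)} {R h : ℝ} (hR : ∀ v ∈ s, ‖v‖ ≤ R)
    (hh : 0 < h) :
    ∃ c : s → Fin ((2 * ⌈R / h⌉₊ + 1) ^ Fintype.card ι), Measurable c ∧
      ∀ v w, c v = c w → dist v w ≤ Fintype.card ι * h := by
  classical
  set m := ⌈R / h⌉₊
  have hmem : ∀ (v : s) i, ⌊v.1 i / h⌋ ∈ Finset.Icc (-(m : ℤ)) m := fun v i =>
    floor_div_mem_Icc hh ((PiLp.norm_apply_le v.1 i).trans (hR v v.2))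
  have hcard : Fintype.card (ι → Finset.Icc (-(m : ℤ)) m) = (2 * m + 1) ^ Fintype.card ι := by
    rw [Fintype.card_fun, Fintype.card_coe, Int.card_Icc]
    congr 1
    lia
  have hmeas : Measurable fun (v : s) i => (⟨⌊v.1 i / h⌋, hmem v i⟩ : Finset.Icc (-(m : ℤ)) m) :=
    measurable_pi_iff.2 fun i => Measurable.subtype_mk (by fun_prop)
  refine ⟨_, (Measurable.of_discrete (f := Fintype.equivFinOfCardEq hcard)).comp hmeas,
    fun v w hvw => dist_le_of_floor_div_eq hh fun i => ?_⟩
  exact congrArg Subtype.val (congrFun ((Fintype.equivFinOfCardEq hcard).injective hvw) i)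

theorem hasFiniteBoxDimension_of_isBounded {s : Set (EuclideanSpace ℝ ι)}
    (hs : Bornology.IsBounded s) : HasFiniteBoxDimension s := by
  obtain ⟨R, hR_pos, hR⟩ := hs.exists_pos_norm_le
  set k : ℝ := Fintype.card ι + 1
  have hk : 0 < k := by positivity
  refine ⟨(2 * R * k + 3) ^ Fintype.card ι, Fintype.card ι, fun δ hδ hδ_le => ?_⟩
  obtain ⟨c, hc, hdiam⟩ := exists_grid_partition hR (div_pos hδ hk)
  refine ⟨_, c, hc, ?_, fun v w hvw => (hdiam v w hvw).trans ?_⟩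
  · have hδ_inv : 1 ≤ δ⁻¹ := (one_le_inv₀ hδ).2 hδ_le
    have hceil : (⌈R / (δ / k)⌉₊ : ℝ) ≤ R * k * δ⁻¹ + 1 := by
      refine (Nat.ceil_lt_add_one (by positivity)).le.trans_eq ?_
      rw [div_div_eq_mul_div, div_eq_mul_inv]
    rw [Nat.cast_pow, ← mul_pow]
    gcongr
    push_cast
    linarith
  · rw [mul_div_assoc', div_le_iff₀ hk, mul_comm]
    gcongr
    linarith

end EuclideanBoxDimension

section MatrixNorm

open scoped Matrix.Norms.L2Operator

variable {n : Type*} [Fintype n] [DecidableEq n]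

lemma exists_norm_adjugate_le (n : Type*) [Fintype n] [DecidableEq n] :
    ∃ C, 0 < C ∧ ∀ M : Matrix n n ℝ, ‖M.adjugate‖ ≤ C * ‖M‖ ^ (Fintype.card n - 1) := by
  have : ProperSpace (Matrix n n ℝ) := FiniteDimensional.proper ℝ _
  obtain ⟨C, hC⟩ := (isCompact_closedBall (0 : Matrix n n ℝ) 1).exists_bound_of_continuousOn
    (f := Matrix.adjugate) (Continuous.matrix_adjugate continuous_id).continuousOn
  refine ⟨max C 1, by positivity, fun M => ?_⟩
  have hM : M = ‖M‖ • ‖M‖⁻¹ • M := by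
    rcases eq_or_ne M 0 with rfl | hM
    · simp
    · rw [smul_inv_smul₀ (norm_ne_zero_iff.2 hM)]
  calc ‖M.adjugate‖ = ‖(‖M‖⁻¹ • M).adjugate‖ * ‖M‖ ^ (Fintype.card n - 1) := by
        conv_lhs => rw [hM]
        rw [Matrix.adjugate_smul, norm_smul, norm_pow, norm_norm, mul_comm]
    _ ≤ max C 1 * ‖M‖ ^ (Fintype.card n - 1) := by
        gcongr
        exact (hC _ (inv_norm_smul_mem_unitClosedBall M)).trans (le_max_left _ _)

lemma isUnit_of_abs_eq_one {a : ℝ} (ha : |a| = 1) : IsUnit a :=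
  isUnit_iff_ne_zero.2 (abs_pos.1 (ha ▸ one_pos))

lemma norm_inv_eq_norm_adjugate {M : Matrix n n ℝ} (hM : |M.det| = 1) :
    ‖M⁻¹‖ = ‖M.adjugate‖ := by
  rw [Matrix.inv_def, norm_smul, Ring.inverse_eq_inv', norm_inv, Real.norm_eq_abs, hM, inv_one,
    one_mul]

lemma measurable_norm_matrix {Y : Type*} [MeasurableSpace Y] {A : Y → Matrix n n ℝ}
    (hA : ∀ i j, Measurable fun y => A y i j) : Measurable fun y => ‖A y‖ := by
  have hnorm : Continuous fun M : n → n → ℝ => ‖Matrix.of M‖ := continuous_norm (E := Matrix n n ℝ)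
  exact hnorm.measurable.comp (measurable_pi_iff.2 fun i => measurable_pi_iff.2 (hA i))

lemma norm_toEuclideanLin_le_s12 (M : Matrix n n ℝ) (z : EuclideanSpace ℝ n) :
    ‖Matrix.toEuclideanLin M z‖ ≤ ‖M‖ * ‖z‖ :=
  Matrix.l2_opNorm_mulVec M z

lemma measurable_toEuclideanLin_apply {Y : Type*} [MeasurableSpace Y] {A : Y → Matrix n n ℝ}
    (hA : ∀ i j, Measurable fun y => A y i j) {g : Y → EuclideanSpace ℝ n} (hg : Measurable g) :
    Measurable fun y => Matrix.toEuclideanLin (A y) (g y) := by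
  refine (WithLp.measurable_toLp 2 (n → ℝ)).comp (measurable_pi_iff.2 fun i => ?_)
  exact Finset.measurable_sum _ fun j _ => (hA i j).mul (by fun_prop)

lemma toEuclideanLin_inv_apply_apply_s12 {M : Matrix n n ℝ} (hM : IsUnit M.det)
    (z : EuclideanSpace ℝ n) :
    Matrix.toEuclideanLin M⁻¹ (Matrix.toEuclideanLin M z) = z := by
  rw [← LinearMap.comp_apply, ← Matrix.toLpLin_mul_same, Matrix.nonsing_inv_mul M hM,
    Matrix.toLpLin_one, LinearMap.id_apply]

lemma toEuclideanLin_apply_ne_zero {M : Matrix n n ℝ} (hM : IsUnit M.det)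
    {z : EuclideanSpace ℝ n} (hz : z ≠ 0) : Matrix.toEuclideanLin M z ≠ 0 := fun h =>
  hz (by rw [← toEuclideanLin_inv_apply_apply_s12 hM z, h, map_zero])

end MatrixNorm

section ProjectiveAction

open scoped Matrix.Norms.L2Operator

lemma mul_norm_sub_le_two_mul_norm_smul_sub_smul {E : Type*} [NormedAddCommGroup E]
    [NormedSpace ℝ E] {v w : E} (hvw : ‖v‖ = ‖w‖) {a b : ℝ} (ha : 0 ≤ a) (hb : 0 ≤ b) :
    a * ‖v - w‖ ≤ 2 * ‖a • v - b • w‖ := by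
  have hab : |a - b| * ‖w‖ ≤ ‖a • v - b • w‖ := by
    have := abs_norm_sub_norm_le (a • v) (b • w)
    rwa [norm_smul, norm_smul, hvw, ← sub_mul, abs_mul, abs_norm, Real.norm_of_nonneg ha,
      Real.norm_of_nonneg hb] at this
  calc a * ‖v - w‖ = ‖(a • v - b • w) - (a - b) • w‖ := by
        rw [← norm_smul_of_nonneg ha]
        congr 1
        module
    _ ≤ ‖a • v - b • w‖ + ‖(a - b) • w‖ := norm_sub_le _ _
    _ ≤ 2 * ‖a • v - b • w‖ := by
        rw [norm_smul, Real.norm_eq_abs]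
        linarith

variable {d : ℕ} {M : Matrix (Fin d) (Fin d) ℝ}

lemma coe_projAct_s12 (hM : IsUnit M.det) (v : Metric.sphere (0 : EuclideanSpace ℝ (Fin d)) 1) :
    (projAct M v : EuclideanSpace ℝ (Fin d)) =
      ‖Matrix.toEuclideanLin M v‖⁻¹ • Matrix.toEuclideanLin M v :=
  congrArg Subtype.val
    (dif_neg (toEuclideanLin_apply_ne_zero hM (ne_zero_of_mem_unit_sphere v)))

lemma projAct_one (v : Metric.sphere (0 : EuclideanSpace ℝ (Fin d)) 1) : projAct 1 v = v := by
  refine Subtype.ext ?_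
  rw [coe_projAct_s12 (by simp), Matrix.toLpLin_one, LinearMap.id_apply, norm_eq_of_mem_sphere,
    inv_one, one_smul]

lemma projAct_mul {N : Matrix (Fin d) (Fin d) ℝ} (hM : IsUnit M.det) (hN : IsUnit N.det)
    (v : Metric.sphere (0 : EuclideanSpace ℝ (Fin d)) 1) :
    projAct (M * N) v = projAct M (projAct N v) := by
  have hNv : ‖Matrix.toEuclideanLin N v‖ ≠ 0 :=
    norm_ne_zero_iff.2 (toEuclideanLin_apply_ne_zero hN (ne_zero_of_mem_unit_sphere v))
  refine Subtype.ext ?_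
  rw [coe_projAct_s12 (by simpa only [Matrix.det_mul] using hM.mul hN), coe_projAct_s12 hM,
    coe_projAct_s12 hN, Matrix.toLpLin_mul_same, LinearMap.comp_apply, map_smul, norm_smul, norm_inv,
    norm_norm, smul_smul]
  congr 1
  field_simp

lemma measurable_projAct {Y : Type*} [MeasurableSpace Y] {A : Y → Matrix (Fin d) (Fin d) ℝ}
    (hA : ∀ i j, Measurable fun y => A y i j) (hdet : ∀ y, IsUnit (A y).det)
    {g : Y → Metric.sphere (0 : EuclideanSpace ℝ (Fin d)) 1} (hg : Measurable g) :
    Measurable fun y => projAct (A y) (g y) := by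
  have hlin := measurable_toEuclideanLin_apply hA (measurable_subtype_coe.comp hg)
  have hcoe : Measurable fun y => (projAct (A y) (g y) : EuclideanSpace ℝ (Fin d)) := by
    simp_rw [fun y => coe_projAct_s12 (hdet y) (g y)]
    exact hlin.norm.inv.smul hlin
  exact hcoe.subtype_mk

lemma dist_le_mul_dist_projAct (hM : IsUnit M.det)
    (v w : Metric.sphere (0 : EuclideanSpace ℝ (Fin d)) 1) :
    dist v w ≤ 2 * ‖M⁻¹‖ * ‖M‖ * dist (projAct M v) (projAct M w) := by
  set a := ‖Matrix.toEuclideanLin M v‖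
  set b := ‖Matrix.toEuclideanLin M w‖
  have ha : 0 < a :=
    norm_pos_iff.2 (toEuclideanLin_apply_ne_zero hM (ne_zero_of_mem_unit_sphere v))
  have haM : a ≤ ‖M‖ := by
    simpa only [norm_eq_of_mem_sphere, mul_one] using norm_toEuclideanLin_le_s12 M v
  have hinv : ‖a⁻¹ • (v : EuclideanSpace ℝ (Fin d)) - b⁻¹ • (w : EuclideanSpace ℝ (Fin d))‖ ≤
      ‖M⁻¹‖ * dist (projAct M v) (projAct M w) := by
    have := norm_toEuclideanLin_le_s12 M⁻¹ ((projAct M v).1 - (projAct M w).1)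
    rwa [coe_projAct_s12 hM, coe_projAct_s12 hM, map_sub, map_smul, map_smul,
      toEuclideanLin_inv_apply_apply_s12 hM, toEuclideanLin_inv_apply_apply_s12 hM, ← coe_projAct_s12 hM,
      ← coe_projAct_s12 hM, ← dist_eq_norm] at this
  have hnorm := mul_norm_sub_le_two_mul_norm_smul_sub_smul
    ((norm_eq_of_mem_sphere v).trans (norm_eq_of_mem_sphere w).symm)
    (inv_nonneg.2 ha.le) (inv_nonneg.2 (norm_nonneg (Matrix.toEuclideanLin M w)))
  rw [inv_mul_le_iff₀ ha] at hnorm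
  calc dist v w = ‖v.1 - w.1‖ := by rw [Subtype.dist_eq, dist_eq_norm]
    _ ≤ ‖M‖ * (2 * (‖M⁻¹‖ * dist (projAct M v) (projAct M w))) := hnorm.trans (by gcongr)
    _ = _ := by ring

lemma exists_dist_le_mul_norm_pow_mul_dist_projAct (d : ℕ) :
    ∃ (C : ℝ) (D : ℕ), 0 < C ∧ ∀ M : Matrix (Fin d) (Fin d) ℝ, |M.det| = 1 → ∀ v w,
      dist v w ≤ C * ‖M‖ ^ D * dist (projAct M v) (projAct M w) := by
  obtain ⟨C, hC, hadj⟩ := exists_norm_adjugate_le (Fin d)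
  refine ⟨2 * C, Fintype.card (Fin d) - 1 + 1, by positivity, fun M hM v w => ?_⟩
  calc dist v w ≤ 2 * ‖M⁻¹‖ * ‖M‖ * dist (projAct M v) (projAct M w) :=
        dist_le_mul_dist_projAct (isUnit_of_abs_eq_one hM) v w
    _ ≤ 2 * (C * ‖M‖ ^ (Fintype.card (Fin d) - 1)) * ‖M‖ *
          dist (projAct M v) (projAct M w) := by
        gcongr
        exact (norm_inv_eq_norm_adjugate hM).trans_le (hadj M)
    _ = _ := by ring

end ProjectiveAction

section MatrixCocycle

open Topology
open scoped Matrix.Norms.L2Operator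

/-- `A n x` is the product `B (T^[n-1] x) ⋯ B (T x) * B x` of the generator `B` along the orbit of
`x` under `T`, encoded by its recursion in `n`. -/
structure IsMatrixCocycle {X n : Type*} [Fintype n] [DecidableEq n] (T : X → X)
    (B : X → Matrix n n ℝ) (A : ℕ → X → Matrix n n ℝ) : Prop where
  zero : ∀ x, A 0 x = 1
  succ : ∀ k x, A (k + 1) x = B (T^[k] x) * A k x

namespace IsMatrixCocycle

variable {X n : Type*} [Fintype n] [DecidableEq n] {T : X → X} {B : X → Matrix n n ℝ}
  {A : ℕ → X → Matrix n n ℝ}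

lemma abs_det_eq_one (hA : IsMatrixCocycle T B A) (hB : ∀ x, |(B x).det| = 1) (k : ℕ) (x : X) :
    |(A k x).det| = 1 := by
  induction k with
  | zero => rw [hA.zero, Matrix.det_one, abs_one]
  | succ k ih => rw [hA.succ, Matrix.det_mul, abs_mul, hB, ih, one_mul]

lemma measurable_entry [MeasurableSpace X] (hA : IsMatrixCocycle T B A) (hT : Measurable T)
    (hB : ∀ i j, Measurable fun x => B x i j) (k : ℕ) :
    ∀ i j, Measurable fun x => A k x i j := by
  induction k with
  | zero => simp only [hA.zero, measurable_const, implies_true]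
  | succ k ih =>
    intro i j
    simp only [hA.succ, Matrix.mul_apply]
    exact Finset.measurable_sum _ fun l _ => ((hB i l).comp (hT.iterate k)).mul (ih l j)

end IsMatrixCocycle

variable {X : Type*} {d : ℕ} {T : X → X} {B : X → Matrix (Fin d) (Fin d) ℝ}
  {A : ℕ → X → Matrix (Fin d) (Fin d) ℝ}

lemma iterate_skewProduct_projAct (hA : IsMatrixCocycle T B A) (hB : ∀ x, |(B x).det| = 1)
    (k : ℕ) (x : X) (v : Metric.sphere (0 : EuclideanSpace ℝ (Fin d)) 1) :
    (skewProduct T fun x => projAct (B x))^[k] (x, v) = (T^[k] x, projAct (A k x) v) := by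
  induction k with
  | zero => rw [hA.zero, projAct_one, Function.iterate_zero_apply, Function.iterate_zero_apply]
  | succ k ih =>
    rw [Function.iterate_succ_apply', ih, Function.iterate_succ_apply', hA.succ,
      projAct_mul (isUnit_of_abs_eq_one (hB _)) (isUnit_of_abs_eq_one (hA.abs_det_eq_one hB k x)),
      skewProduct]

lemma exists_hasFiberContractionBound_projAct (hA : IsMatrixCocycle T B A)
    (hB : ∀ x, |(B x).det| = 1) :
    ∃ (C : ℝ) (D : ℕ), HasFiberContractionBound T (fun x => projAct (B x))
      fun k x => C + D * Real.log ‖A k x‖ := by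
  obtain ⟨C, D, hC, hdist⟩ := exists_dist_le_mul_norm_pow_mul_dist_projAct d
  refine ⟨Real.log C, D, fun k x v w => ?_⟩
  have hdet := hA.abs_det_eq_one hB k x
  have hnorm : 0 < ‖A k x‖ := norm_pos_iff.2 fun h =>
    toEuclideanLin_apply_ne_zero (isUnit_of_abs_eq_one hdet) (ne_zero_of_mem_unit_sphere v)
      (by rw [h, map_zero, LinearMap.zero_apply])
  rw [iterate_skewProduct_projAct hA hB, iterate_skewProduct_projAct hA hB, Real.exp_add,
    Real.exp_log hC, Real.exp_nat_mul, Real.exp_log hnorm]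
  exact hdist _ hdet v w

lemma tendsto_lintegral_ofReal_add_mul_div [MeasurableSpace X] {ρ : Measure X}
    [IsFiniteMeasure ρ] {u : ℕ → X → ℝ} (hu : ∀ k, Measurable (u k))
    (hlim : Tendsto (fun k : ℕ => (∫⁻ x, ENNReal.ofReal (u k x) ∂ρ) / k) atTop (𝓝 0))
    (C : ℝ) (D : ℕ) :
    Tendsto (fun k : ℕ => (∫⁻ x, ENNReal.ofReal (C + D * u k x) ∂ρ) / k) atTop (𝓝 0) := by
  have hconst : Tendsto (fun k : ℕ => ENNReal.ofReal C * ρ Set.univ / k) atTop (𝓝 0) := by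
    simpa only [ENNReal.div_top] using ENNReal.Tendsto.const_div ENNReal.tendsto_nat_nhds_top
      (.inr (ENNReal.mul_ne_top ENNReal.ofReal_ne_top (measure_ne_top ρ Set.univ)))
  have hsum := hconst.add
    (ENNReal.Tendsto.const_mul hlim (.inr (ENNReal.natCast_ne_top D)))
  rw [mul_zero, add_zero] at hsum
  refine tendsto_of_tendsto_of_tendsto_of_le_of_le tendsto_const_nhds hsum
    (fun _ => zero_le) fun k => ?_
  calc (∫⁻ x, ENNReal.ofReal (C + D * u k x) ∂ρ) / k
      ≤ (∫⁻ x, (ENNReal.ofReal C + D * ENNReal.ofReal (u k x)) ∂ρ) / k := by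
        gcongr with x
        refine ENNReal.ofReal_add_le.trans_eq ?_
        rw [ENNReal.ofReal_mul D.cast_nonneg, ENNReal.ofReal_natCast]
    _ = ENNReal.ofReal C * ρ Set.univ / k + D * ((∫⁻ x, ENNReal.ofReal (u k x) ∂ρ) / k) := by
        rw [lintegral_add_left measurable_const, lintegral_const,
          lintegral_const_mul _ (hu k).ennreal_ofReal, ENNReal.add_div,
          mul_div_assoc (D : ℝ≥0∞)]

end MatrixCocycle

theorem ledrappier_invariance_criterion_general
    {X : Type*} [MeasurableSpace X] (ρ : Measure X) [IsProbabilityMeasure ρ]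
    (T : X → X) (hT : Measurable T) (d : ℕ)
    (B : X → Matrix (Fin d) (Fin d) ℝ) (hBmeas : ∀ i j, Measurable fun x => B x i j)
    (hBdet : ∀ x, |(B x).det| = 1)
    (γ : X → Measure (Metric.sphere (0 : EuclideanSpace ℝ (Fin d)) 1))
    (hγprob : ∀ x, IsProbabilityMeasure (γ x))
    (hγmeas : ∀ E, MeasurableSet E → Measurable fun x => γ x E)
    (hinv :
      Measure.map
        (fun p : X × Metric.sphere (0 : EuclideanSpace ℝ (Fin d)) 1 =>
          (T p.1, projAct (B p.1) p.2))
        (ρ.bind fun x => (γ x).map fun v => (x, v)) =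
      ρ.bind fun x => (γ x).map fun v => (x, v))
    (Bn : ℕ → X → Matrix (Fin d) (Fin d) ℝ) (hBn : IsMatrixCocycle T B Bn)
    (hlyap : Tendsto
      (fun n : ℕ => (∫⁻ x, ENNReal.ofReal (Real.log (matOpNorm (Bn n x))) ∂ρ) / (n : ℝ≥0∞))
      atTop (nhds 0)) :
    ∀ᵐ x ∂ρ, (γ x).map (projAct (B x)) = γ (T x) := by
  let κ : ProbabilityTheory.Kernel X (Metric.sphere (0 : EuclideanSpace ℝ (Fin d)) 1) :=
    ⟨γ, Measure.measurable_of_measurable_coe γ hγmeas⟩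
  have : ProbabilityTheory.IsMarkovKernel κ := ⟨hγprob⟩
  have hF : MeasurePreserving (skewProduct T fun x => projAct (B x)) (ρ.compProd κ)
      (ρ.compProd κ) := by
    refine ⟨(hT.comp measurable_fst).prodMk (measurable_projAct
      (fun i j => (hBmeas i j).comp measurable_fst)
      (fun p => isUnit_of_abs_eq_one (hBdet p.1)) measurable_snd), ?_⟩
    rw [← bind_map_prodMk_eq_compProd]
    exact hinv
  obtain ⟨C, D, hcontr⟩ := exists_hasFiberContractionBound_projAct hBn hBdet
  have hlog : ∀ n, Measurable fun x => Real.log (matOpNorm (Bn n x)) := fun n =>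
    (measurable_norm_matrix (hBn.measurable_entry hT hBmeas n)).log
  exact ae_map_eq_of_tendsto_lintegral_div hT hF
    (fun n => ((hlog n).const_mul _).const_add _) hcontr
    (tendsto_lintegral_ofReal_add_mul_div hlog hlyap C D)
    (hasFiniteBoxDimension_of_isBounded Metric.isBounded_sphere)

/-- **Ledrappier's invariance criterion (Furstenberg's criterion).**
Let `T` preserve the probability measure `ρ` on a standard Borel space `X` and let
`B : X → SL(d,ℝ)` be measurable, inducing the extended dynamics
`T̂(x,v) = (Tx, B(x)v/|B(x)v|)` on `X × S^{d-1}`.  If `γ : X → 𝒫(S^{d-1})` is a measurable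
family with `γ_x(dv) ρ(dx)` invariant under `T̂`, and the top Lyapunov exponent
`λ⁺ = lim (1/n) ∫ log‖B(T^{n-1}x) ⋯ B(x)‖ dρ` exists and equals `0`, then
`B(x)_* γ_x = γ_{Tx}` for `ρ`-almost every `x`. -/
theorem ledrappier_invariance_criterion
    {X : Type} [MeasurableSpace X] [StandardBorelSpace X]
    (ρ : Measure X) [IsProbabilityMeasure ρ]
    (T : X → X) (hT : Measurable T) (hTρ : ρ.map T = ρ)
    (d : ℕ) (hd : 1 ≤ d)
    (B : X → Matrix (Fin d) (Fin d) ℝ) (hBmeas : ∀ i j, Measurable fun x => B x i j)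
    (hBdet : ∀ x, (B x).det = 1)
    (γ : X → Measure (Metric.sphere (0 : EuclideanSpace ℝ (Fin d)) 1))
    (hγprob : ∀ x, IsProbabilityMeasure (γ x))
    (hγmeas : ∀ E, MeasurableSet E → Measurable fun x => γ x E)
    (hinv :
      Measure.map
        (fun p : X × Metric.sphere (0 : EuclideanSpace ℝ (Fin d)) 1 =>
          (T p.1, projAct (B p.1) p.2))
        (ρ.bind fun x => (γ x).map fun v => (x, v)) =
      ρ.bind fun x => (γ x).map fun v => (x, v))
    (Bn : ℕ → X → Matrix (Fin d) (Fin d) ℝ)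
    (hBn0 : ∀ x, Bn 0 x = 1)
    (hBns : ∀ n x, Bn (n + 1) x = B (T^[n] x) * Bn n x)
    (hlyap : Tendsto
      (fun n : ℕ => (∫⁻ x, ENNReal.ofReal (Real.log (matOpNorm (Bn n x))) ∂ρ) / (n : ℝ≥0∞))
      atTop (nhds 0)) :
    ∀ᵐ x ∂ρ, (γ x).map (projAct (B x)) = γ (T x) :=
  ledrappier_invariance_criterion_general ρ T hT d B hBmeas (fun x => by rw [hBdet, abs_one]) γ
    hγprob hγmeas hinv Bn ⟨hBn0, hBns⟩ hlyap
end
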